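/- arXiv:2012.13795 — 3 statements merged into one kernel-verified Lean document; each statement's English description precedes it below -/
import Mathlib

section
/- If σ is an adjacency-free permutation and π is a permutation containing an interval copy of one of the permutations 1243, 2134, 3421, 4312 (the symmetries of 1243 under reversal, complementation and inversion), then μ(σ,π) = 0. -/
/-!
The permutation pattern poset and its Möbius function.

A permutation of length `n` is represented as an element of the symmetric
group on `Fin n`; the collection of all permutations of all lengths is the
sigma type `PPerm`.  Pattern containment `PPerm.Le` makes `PPerm` into the
permutation pattern poset, and `mu` is its Möbius function, defined by the
usual recursion `μ(σ,σ) = 1`, `μ(σ,π) = -∑_{σ ≤ λ < π} μ(σ,λ)` for `σ < π`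
and `μ(σ,π) = 0` otherwise.
-/

open scoped Classical

/-- A permutation of an arbitrary finite length `n`, as an element of the
symmetric group on `Fin n`. -/
abbrev PPerm : Type := Σ n : ℕ, Equiv.Perm (Fin n)

namespace PPerm

/-- Classical pattern containment `σ ≤ π`: there is a strictly increasing map
of positions along which `π` realises the same relative order as `σ`. -/
def Le (σ π : PPerm) : Prop :=
  ∃ f : Fin σ.1 → Fin π.1, StrictMono f ∧
    ∀ a b : Fin σ.1, σ.2 a < σ.2 b ↔ π.2 (f a) < π.2 (f b)

/-- Strict pattern containment. -/
def Lt (σ π : PPerm) : Prop := Le σ π ∧ σ ≠ π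

/-- The permutation `1` of length one. -/
def one : PPerm := ⟨1, 1⟩

/-- The direct sum `α ⊕ β` of two permutations: `β` is placed after and
above `α`. -/
def dsum (α β : PPerm) : PPerm :=
  ⟨α.1 + β.1, finSumFinEquiv.symm.trans ((Equiv.sumCongr α.2 β.2).trans finSumFinEquiv)⟩

end PPerm

/-- Fuelled recursion computing the Möbius function of the permutation
pattern poset.  Any `λ` with `σ ≤ λ < π` has length `< |π|`, so for any
fuel `≥ |π| + 1` this computes the standard recursion
`μ(σ,σ) = 1`, `μ(σ,π) = -∑_{σ ≤ λ < π} μ(σ,λ)` for `σ < π`, and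
`μ(σ,π) = 0` when `σ ≰ π`. -/
noncomputable def muAux : ℕ → PPerm → PPerm → ℤ
  | 0, _, _ => 0
  | n + 1, σ, π =>
    if σ = π then 1
    else if PPerm.Le σ π then
      - ∑ m ∈ Finset.range π.1,
          ∑ p ∈ Finset.univ.filter
              (fun p : Equiv.Perm (Fin m) => PPerm.Le σ ⟨m, p⟩ ∧ PPerm.Le ⟨m, p⟩ π),
            muAux n σ ⟨m, p⟩
    else 0

/-- The Möbius function of the permutation pattern poset. -/
noncomputable def mu (σ π : PPerm) : ℤ := muAux (π.1 + 1) σ π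

/-- The closed interval `[σ, π]` of the permutation pattern poset, as a
finset (any `λ ≤ π` has length `≤ |π|`). -/
noncomputable def intervalCC (σ π : PPerm) : Finset PPerm :=
  (Finset.range (π.1 + 1)).biUnion fun m =>
    (Finset.univ.filter fun p : Equiv.Perm (Fin m) =>
        PPerm.Le σ ⟨m, p⟩ ∧ PPerm.Le ⟨m, p⟩ π).image fun p => (⟨m, p⟩ : PPerm)

/-- The half-open interval `[σ, π)` of the permutation pattern poset. -/
noncomputable def intervalCO (σ π : PPerm) : Finset PPerm :=
  (intervalCC σ π).filter fun lam => lam ≠ π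

/-- `π` contains an interval copy of `α`: there is a set of `|α|` contiguous
positions of `π` (starting at position `i`), whose values form a contiguous
range (starting at value `v`), and whose entries are order-isomorphic
to `α`. -/
def HasIntervalCopy (π α : PPerm) : Prop :=
  ∃ (f : Fin α.1 → Fin π.1) (i v : ℕ),
    (∀ a : Fin α.1, (f a : ℕ) = i + (a : ℕ)) ∧
    (∀ a : Fin α.1, v ≤ (π.2 (f a) : ℕ) ∧ (π.2 (f a) : ℕ) < v + α.1) ∧
    (∀ a b : Fin α.1, α.2 a < α.2 b ↔ π.2 (f a) < π.2 (f b))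

/-- Position `i` starts an adjacency of `π`: `|π(i+1) − π(i)| = 1`. -/
def AdjAtPos (π : PPerm) (i : Fin π.1) : Prop :=
  ∃ j : Fin π.1, (j : ℕ) = (i : ℕ) + 1 ∧
    ((π.2 j : ℕ) = (π.2 i : ℕ) + 1 ∨ (π.2 i : ℕ) = (π.2 j : ℕ) + 1)

/-- `σ` is adjacency-free: it has no adjacency. -/
def AdjacencyFree (σ : PPerm) : Prop := ∀ i : Fin σ.1, ¬ AdjAtPos σ i

/-- The permutation `1243` (0-indexed values `0 1 3 2`). -/
noncomputable def p1243 : PPerm :=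
  ⟨4, Equiv.ofBijective (![0, 1, 3, 2] : Fin 4 → Fin 4) (by decide)⟩

/-- The permutation `2134` (0-indexed values `1 0 2 3`). -/
noncomputable def p2134 : PPerm :=
  ⟨4, Equiv.ofBijective (![1, 0, 2, 3] : Fin 4 → Fin 4) (by decide)⟩

/-- The permutation `3421` (0-indexed values `2 3 1 0`). -/
noncomputable def p3421 : PPerm :=
  ⟨4, Equiv.ofBijective (![2, 3, 1, 0] : Fin 4 → Fin 4) (by decide)⟩

/-- The permutation `4312` (0-indexed values `3 2 0 1`). -/
noncomputable def p4312 : PPerm :=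
  ⟨4, Equiv.ofBijective (![3, 2, 0, 1] : Fin 4 → Fin 4) (by decide)⟩


/-! ## Embeddings -/

/-- `f` is an embedding of `lam` into `π`. -/
def IsEmb (lam π : PPerm) (f : Fin lam.1 → Fin π.1) : Prop :=
  StrictMono f ∧ ∀ a b : Fin lam.1, lam.2 a < lam.2 b ↔ π.2 (f a) < π.2 (f b)

/-- `lam` embeds into `π` avoiding the positions in `s`. -/
def LeAvoid (lam π : PPerm) (s : Set (Fin π.1)) : Prop :=
  ∃ f, IsEmb lam π f ∧ ∀ a, f a ∉ s

/-- `x` lies strictly between `a` and `b`. -/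
def PBtw {n : ℕ} (a x b : Fin n) : Prop := (a < x ∧ x < b) ∨ (b < x ∧ x < a)

/-- `a`, `b` are adjacent in `π` once the positions in `s` are removed. -/
def AdjR (π : PPerm) (s : Set (Fin π.1)) (a b : Fin π.1) : Prop :=
  a ≠ b ∧ ∀ x, (PBtw a x b ∨ PBtw (π.2 a) (π.2 x) (π.2 b)) → x ∈ s

theorem PBtw.symm {n : ℕ} {a x b : Fin n} (h : PBtw a x b) : PBtw b x a := Or.symm h

theorem AdjR.symm {π : PPerm} {s : Set (Fin π.1)} {a b : Fin π.1} (h : AdjR π s a b) :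
    AdjR π s b a :=
  ⟨h.1.symm, fun x hx => h.2 x (hx.imp PBtw.symm PBtw.symm)⟩

theorem AdjR.mono {π : PPerm} {s t : Set (Fin π.1)} {a b : Fin π.1} (h : AdjR π s a b)
    (hst : s ⊆ t) : AdjR π t a b :=
  ⟨h.1, fun x hx => hst (h.2 x hx)⟩

theorem PPerm.le_trans' {α β γ : PPerm} (h : PPerm.Le α β) (h' : PPerm.Le β γ) :
    PPerm.Le α γ := by
  obtain ⟨f, hf, hf'⟩ := h
  obtain ⟨g, hg, hg'⟩ := h'
  exact ⟨g ∘ f, hg.comp hf, fun a b => (hf' a b).trans (hg' _ _)⟩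

theorem PPerm.le_refl' (α : PPerm) : PPerm.Le α α := ⟨id, strictMono_id, fun _ _ => Iff.rfl⟩

theorem PPerm.length_le {α β : PPerm} (h : PPerm.Le α β) : α.1 ≤ β.1 := by
  obtain ⟨f, hf, _⟩ := h
  simpa using Fintype.card_le_of_injective f hf.injective

theorem PPerm.eq_of_le_same {n : ℕ} {p q : Equiv.Perm (Fin n)}
    (h : PPerm.Le ⟨n, p⟩ ⟨n, q⟩) : p = q := by
  obtain ⟨f, hf, hf'⟩ := h
  change Fin n → Fin n at f
  have hid : f = id := by
    have hs : Function.Surjective f := Finite.surjective_of_injective hf.injective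
    have := Subsingleton.elim (hf.orderIsoOfSurjective f hs) (OrderIso.refl (Fin n))
    funext x
    exact congrArg (fun e : Fin n ≃o Fin n => e x) this
  subst hid
  have hm : StrictMono (fun x => q (p.symm x)) := by
    intro x y hxy
    have := (hf' (p.symm x) (p.symm y)).1 (by simpa using hxy)
    simpa using this
  have hs : Function.Surjective (fun x => q (p.symm x)) :=
    q.surjective.comp p.symm.surjective
  have := Subsingleton.elim (hm.orderIsoOfSurjective _ hs) (OrderIso.refl (Fin n))
  ext x : 1
  have h2 := congrArg (fun e : Fin n ≃o Fin n => e (p x)) this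
  simp at h2
  exact h2.symm

/-! ## The Möbius recursion -/

theorem muAux_eq (σ : PPerm) : ∀ (n m : ℕ) (π : PPerm), π.1 < n → π.1 < m →
    muAux n σ π = muAux m σ π := by
  intro n
  induction n with
  | zero => intro m π h; omega
  | succ n ih =>
    intro m π h h'
    cases m with
    | zero => omega
    | succ m =>
      simp only [muAux]
      split_ifs
      · rfl
      · congr 1
        refine Finset.sum_congr rfl fun k hk => Finset.sum_congr rfl fun p _ => ?_
        rw [Finset.mem_range] at hk
        exact ih m ⟨k, p⟩ (by simp; omega) (by simp; omega)
      · rfl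

theorem mu_of_not_le {σ π : PPerm} (h : ¬ PPerm.Le σ π) : mu σ π = 0 := by
  have h1 : σ ≠ π := by rintro rfl; exact h (PPerm.le_refl' _)
  simp [mu, muAux, h, h1]

/-- The Möbius recursion, summed over all permutations below `π`. -/
theorem mu_rec {σ π : PPerm} (hne : σ ≠ π) :
    mu σ π = - ∑ m ∈ Finset.range π.1, ∑ p : Equiv.Perm (Fin m),
      if PPerm.Le ⟨m, p⟩ π then mu σ ⟨m, p⟩ else 0 := by
  by_cases hle : PPerm.Le σ π
  · rw [mu, muAux, if_neg hne, if_pos hle]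
    congr 1
    refine Finset.sum_congr rfl fun k hk => ?_
    rw [Finset.sum_filter]
    refine Finset.sum_congr rfl fun p _ => ?_
    rw [Finset.mem_range] at hk
    by_cases h1 : PPerm.Le σ ⟨k, p⟩
    · by_cases h2 : PPerm.Le ⟨k, p⟩ π
      · rw [if_pos ⟨h1, h2⟩, if_pos h2]
        exact muAux_eq σ _ _ _ (by simpa using hk) (by simp)
      · simp [h2]
    · simp [h1, mu_of_not_le h1]
  · rw [mu_of_not_le hle, eq_comm, neg_eq_zero]
    refine Finset.sum_eq_zero fun k _ => Finset.sum_eq_zero fun p _ => ?_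
    split_ifs with h
    · exact mu_of_not_le fun h' => hle (PPerm.le_trans' h' h)
    · rfl

theorem mu_sum {σ π : PPerm} (hne : σ ≠ π) :
    ∑ m ∈ Finset.range (π.1 + 1), ∑ p : Equiv.Perm (Fin m),
      (if PPerm.Le ⟨m, p⟩ π then mu σ ⟨m, p⟩ else 0) = 0 := by
  rw [Finset.sum_range_succ]
  have h := mu_rec hne
  have : ∑ p : Equiv.Perm (Fin π.1),
      (if PPerm.Le ⟨π.1, p⟩ π then mu σ ⟨π.1, p⟩ else 0) = mu σ π := by
    rw [Finset.sum_eq_single π.2]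
    · exact if_pos (PPerm.le_refl' π)
    · intro p _ hp
      rw [if_neg]
      intro h
      exact hp (PPerm.eq_of_le_same h)
    · simp
  rw [this]
  linarith

/-! ## Deletion and swapping -/

theorem exists_del (π : PPerm) (e : Fin π.1) : ∃ ρ : PPerm, ρ.1 + 1 = π.1 ∧
    ∃ g : Fin ρ.1 → Fin π.1, IsEmb ρ π g ∧ (∀ x, x ≠ e → ∃ a, g a = x) ∧ ∀ a, g a ≠ e := by
  obtain ⟨n, p⟩ := π
  cases n with
  | zero => exact e.elim0
  | succ k =>
    change Fin (k + 1) at e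
    let q : Equiv.Perm (Fin k) := (finSuccAboveEquiv e).trans
      ((p.subtypeEquiv (p := fun x => x ≠ e) (q := fun x => x ≠ p e)
        (fun a => by simp)).trans (finSuccAboveEquiv (p e)).symm)
    have hq : ∀ a, (p e).succAbove (q a) = p (e.succAbove a) := by
      intro a
      have : (finSuccAboveEquiv (p e)) (q a) =
        (p.subtypeEquiv (p := fun x => x ≠ e) (q := fun x => x ≠ p e)
        (fun a => by simp)) (finSuccAboveEquiv e a) := by simp [q]
      exact congrArg Subtype.val this
    refine ⟨⟨k, q⟩, rfl, e.succAbove, ⟨Fin.strictMono_succAbove e, fun a b => ?_⟩, ?_, ?_⟩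
    · change q a < q b ↔ p (e.succAbove a) < p (e.succAbove b)
      rw [← hq, ← hq, (Fin.strictMono_succAbove (p e)).lt_iff_lt]
    · intro x hx
      exact Fin.exists_succAbove_eq hx
    · intro a
      exact Fin.succAbove_ne e a

theorem le_of_leAvoid {π ρ : PPerm} {e : Fin π.1} {g : Fin ρ.1 → Fin π.1} (hg : IsEmb ρ π g)
    (hr : ∀ x, x ≠ e → ∃ a, g a = x) {lam : PPerm} (h : LeAvoid lam π {e}) :
    PPerm.Le lam ρ := by
  obtain ⟨f, hf, hfe⟩ := h
  choose k hk using fun a => hr (f a) (hfe a)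
  refine ⟨k, fun a b hab => ?_, fun a b => ?_⟩
  · rw [← hg.1.lt_iff_lt, hk, hk]
    exact hf.1 hab
  · rw [hf.2, hg.2, hk, hk]

theorem IsEmb.reflect {lam π : PPerm} {f : Fin lam.1 → Fin π.1} (hf : IsEmb lam π f)
    {s : Set (Fin π.1)} {a b : Fin lam.1} (h : AdjR π s (f a) (f b)) :
    AdjR lam (f ⁻¹' s) a b := by
  refine ⟨fun hab => h.1 (by rw [hab]), fun x hx => h.2 (f x) ?_⟩
  simp only [PBtw] at hx ⊢
  rw [← hf.1.lt_iff_lt, ← hf.1.lt_iff_lt, ← hf.1.lt_iff_lt (a := b),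
    ← hf.1.lt_iff_lt (b := a)] at hx
  simpa only [hf.2] using hx

/-- Swapping two adjacent positions. -/
theorem LeAvoid.swap {lam π : PPerm} {s : Set (Fin π.1)} {j k : Fin π.1}
    (hadj : AdjR π s j k) (hk : k ∉ s) (h : LeAvoid lam π (insert k s)) :
    LeAvoid lam π (insert j s) := by
  obtain ⟨f, hf, hfs⟩ := h
  have hjk := hadj.1
  -- comparisons with `j` and `k` agree off `insert k s`
  have pos : ∀ x, x ∉ insert k s → x ≠ j → ((x < j ↔ x < k) ∧ (j < x ↔ k < x)) := by
    intro x hx hxj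
    rw [Set.mem_insert_iff, not_or] at hx
    have : ¬ PBtw j x k := fun h => hx.2 (hadj.2 x (Or.inl h))
    simp only [PBtw] at this
    have := hx.1
    omega
  have val : ∀ x, x ∉ insert k s → x ≠ j →
      ((π.2 x < π.2 j ↔ π.2 x < π.2 k) ∧ (π.2 j < π.2 x ↔ π.2 k < π.2 x)) := by
    intro x hx hxj
    rw [Set.mem_insert_iff, not_or] at hx
    have : ¬ PBtw (π.2 j) (π.2 x) (π.2 k) := fun h => hx.2 (hadj.2 x (Or.inr h))
    simp only [PBtw] at this
    have h1 : π.2 x ≠ π.2 k := fun h => hx.1 (π.2.injective h)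
    have h2 : π.2 x ≠ π.2 j := fun h => hxj (π.2.injective h)
    omega
  refine ⟨fun a => if f a = j then k else f a, ⟨fun a b hab => ?_, fun a b => ?_⟩, fun a => ?_⟩
  · have hlt := hf.1 hab
    have ha := pos _ (hfs a)
    have hb := pos _ (hfs b)
    dsimp only
    split_ifs with h1 h2 h2
    · rw [h1, h2] at hlt; exact absurd hlt (lt_irrefl _)
    · rw [h1] at hlt; exact (hb h2).2.1 hlt
    · rw [h2] at hlt; exact (ha h1).1.1 hlt
    · exact hlt
  · rw [hf.2]
    have ha := val _ (hfs a)
    have hb := val _ (hfs b)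
    dsimp only
    split_ifs with h1 h2 h2
    · rw [h1, h2]; simp
    · rw [h1]; exact (hb h2).2
    · rw [h2]; exact (ha h1).1
    · rfl
  · have := hfs a
    rw [Set.mem_insert_iff, not_or] at this ⊢
    dsimp only
    split_ifs with h1
    · exact ⟨hjk.symm, hk⟩
    · exact ⟨h1, this.2⟩

theorem LeAvoid.mono {lam π : PPerm} {s t : Set (Fin π.1)} (h : LeAvoid lam π t) (hst : s ⊆ t) :
    LeAvoid lam π s := by
  obtain ⟨f, hf, hfs⟩ := h
  exact ⟨f, hf, fun a ha => hfs a (hst ha)⟩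

/-! ## Adjacency-free permutations -/

theorem AdjR.val_succ {n : ℕ} {u v : Fin n} (huv : u < v) (h : ∀ x, ¬ PBtw u x v) :
    (v : ℕ) = u + 1 := by
  by_contra hne
  refine h ⟨u + 1, by omega⟩ (Or.inl ⟨?_, ?_⟩) <;> rw [Fin.lt_def] <;> simp <;> omega

theorem not_adjR {σ : PPerm} (hσ : AdjacencyFree σ) (a b : Fin σ.1) : ¬ AdjR σ ∅ a b := by
  intro h
  wlog hab : a < b generalizing a b
  · exact this b a h.symm (lt_of_le_of_ne (not_lt.1 hab) h.1.symm)
  refine hσ a ⟨b, AdjR.val_succ hab fun x hx => h.2 x (Or.inl hx), ?_⟩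
  have hv : ∀ y, ¬ PBtw (σ.2 a) y (σ.2 b) := fun y hy =>
    h.2 (σ.2.symm y) (Or.inr (by simpa using hy))
  rcases lt_or_gt_of_ne (fun h' => h.1 (σ.2.injective h') : σ.2 a ≠ σ.2 b) with h1 | h1
  · left; exact AdjR.val_succ h1 hv
  · right; exact AdjR.val_succ h1 fun y hy => hv y hy.symm

/-- The main reduction. -/
theorem mu_zero_of_del {σ π : PPerm} (hσ : AdjacencyFree σ) {e a b : Fin π.1}
    (hab : AdjR π ∅ a b) (ha : a ≠ e) (hb : b ≠ e)
    (H : ∀ lam : PPerm, lam.1 < π.1 → ∀ f, IsEmb lam π f → ¬ LeAvoid lam π {e} → mu σ lam = 0) :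
    mu σ π = 0 := by
  have hσπ : σ ≠ π := by rintro rfl; exact not_adjR hσ _ _ hab
  obtain ⟨ρ, hlen, g, hg, hr, hge⟩ := exists_del π e
  have hσρ : σ ≠ ρ := by
    rintro rfl
    obtain ⟨a', rfl⟩ := hr a ha
    obtain ⟨b', rfl⟩ := hr b hb
    exact not_adjR hσ _ _ (by simpa using hg.reflect hab)
  rw [mu_rec hσπ, neg_eq_zero]
  refine Eq.trans ?_ (mu_sum hσρ)
  rw [hlen]
  refine Finset.sum_congr rfl fun m hm => Finset.sum_congr rfl fun p _ => ?_
  rw [Finset.mem_range] at hm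
  by_cases h1 : PPerm.Le ⟨m, p⟩ ρ
  · rw [if_pos h1, if_pos (PPerm.le_trans' h1 ⟨g, hg⟩)]
  · rw [if_neg h1]
    split_ifs with h2
    · obtain ⟨f, hf⟩ := h2
      exact H _ hm f hf fun h => h1 (le_of_leAvoid hg hr h)
    · rfl

/-- Triple adjacencies force the Möbius function to vanish. -/
theorem mu_zero_of_triple {σ : PPerm} (hσ : AdjacencyFree σ) : ∀ (n : ℕ) (π : PPerm), π.1 = n →
    ∀ a b c : Fin π.1, a ≠ c → AdjR π ∅ a b → AdjR π ∅ b c → mu σ π = 0 := by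
  intro n
  induction n using Nat.strong_induction_on with
  | _ n ih =>
    intro π hn a b c hac hab hbc
    refine mu_zero_of_del hσ (e := a) hbc hab.1.symm hac.symm fun lam hlam f hf hav => ?_
    have ha : ∃ x, f x = a := by
      by_contra! h
      exact hav ⟨f, hf, h⟩
    have hb : ∃ x, f x = b := by
      by_contra! h
      refine hav ?_
      rw [← insert_empty_eq]
      exact LeAvoid.swap hab (by simp) ⟨f, hf, by simpa using h⟩
    have hc : ∃ x, f x = c := by
      by_contra! h
      have h1 : LeAvoid lam π (insert b ∅) :=
        LeAvoid.swap (k := c) hbc (by simp) ⟨f, hf, by simpa using h⟩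
      refine hav ?_
      rw [← insert_empty_eq]
      exact LeAvoid.swap hab (by simp) h1
    obtain ⟨a, rfl⟩ := ha
    obtain ⟨b, rfl⟩ := hb
    obtain ⟨c, rfl⟩ := hc
    exact ih lam.1 (by omega) lam rfl a b c (fun h => hac (by rw [h]))
      (by simpa using hf.reflect hab) (by simpa using hf.reflect hbc)

theorem mu_zero_of_quad {σ : PPerm} (hσ : AdjacencyFree σ) : ∀ (n : ℕ) (π : PPerm), π.1 = n →
    ∀ a b c d : Fin π.1, a ≠ c → a ≠ d → b ≠ c → AdjR π ∅ a b → AdjR π ∅ c d →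
      AdjR π {c} b d → mu σ π = 0 := by
  intro n
  induction n using Nat.strong_induction_on with
  | _ n ih =>
    intro π hn a b c d hac had hbc hab hcd hbd
    refine mu_zero_of_del hσ (e := a) hcd hac.symm had.symm fun lam hlam f hf hav => ?_
    have hab' : AdjR π {c} a b := hab.mono (by simp)
    have ha : ∀ f, IsEmb lam π f → ∃ x, f x = a := by
      intro f hf
      by_contra! h
      exact hav ⟨f, hf, h⟩
    have hb : ∀ f, IsEmb lam π f → ∃ x, f x = b := by
      intro f hf
      by_contra! h
      refine hav ?_
      rw [← insert_empty_eq]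
      exact LeAvoid.swap hab (by simp) ⟨f, hf, by simpa using h⟩
    have avc : ¬ LeAvoid lam π {c} ∨ mu σ lam = 0 := by
      refine or_iff_not_imp_left.2 fun h => ?_
      obtain ⟨f, hf, hfc⟩ := not_not.1 h
      have hfc' : f ⁻¹' {c} = ∅ := by
        ext x; simpa using hfc x
      have hd : ∃ x, f x = d := by
        by_contra! h
        have h1 : LeAvoid lam π {b, c} := LeAvoid.swap (k := d) hbd (by simpa using hcd.1.symm)
          ⟨f, hf, fun x => by simpa using ⟨h x, hfc x⟩⟩
        obtain ⟨f', hf', h2⟩ := h1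
        obtain ⟨x, hx⟩ := hb f' hf'
        exact h2 x (by simp [hx])
      obtain ⟨a, rfl⟩ := ha f hf
      obtain ⟨b, rfl⟩ := hb f hf
      obtain ⟨d, rfl⟩ := hd
      refine mu_zero_of_triple hσ _ lam rfl a b d (fun h => had (by rw [h])) ?_ ?_
      · rw [← hfc']; exact hf.reflect hab'
      · rw [← hfc']; exact hf.reflect hbd
    rcases avc with avc | h0
    swap
    · exact h0
    have hc : ∃ x, f x = c := by
      by_contra! h
      exact avc ⟨f, hf, h⟩
    have hd : ∃ x, f x = d := by
      by_contra! h
      refine avc ?_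
      rw [← insert_empty_eq]
      exact LeAvoid.swap hcd (by simp) ⟨f, hf, by simpa using h⟩
    obtain ⟨a, rfl⟩ := ha f hf
    obtain ⟨b, rfl⟩ := hb f hf
    obtain ⟨c, rfl⟩ := hc
    obtain ⟨d, rfl⟩ := hd
    refine ih lam.1 (by omega) lam rfl a b c d (fun h => hac (by rw [h]))
      (fun h => had (by rw [h])) (fun h => hbc (by rw [h]))
      (by simpa using hf.reflect hab) (by simpa using hf.reflect hcd) ?_
    have := hf.reflect hbd
    rwa [show f ⁻¹' {f c} = {c} by ext x; simp [hf.1.injective.eq_iff]] at this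

/-- Positions and values of an interval copy of length four. -/
theorem adjR_of_interval {π : PPerm} {f : Fin 4 → Fin π.1} {i v : ℕ} {u : Fin 4 → ℕ}
    (hf : ∀ a : Fin 4, (f a : ℕ) = i + (a : ℕ)) (hu : ∀ a, (π.2 (f a) : ℕ) = v + u a)
    (hsurj : ∀ k < 4, ∃ a, u a = k)
    (s : Set (Fin 4)) (a b : Fin 4) (hab : a ≠ b)
    (h : ∀ x : Fin 4, (PBtw a x b ∨ (u a < u x ∧ u x < u b) ∨ (u b < u x ∧ u x < u a)) → x ∈ s)
    (hu4 : ∀ a, u a < 4) :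
    AdjR π (f '' s) (f a) (f b) := by
  have hinj : Function.Injective f := by
    intro x y hxy
    have h1 := hf x
    have h2 := hf y
    rw [hxy] at h1
    exact Fin.ext (by omega)
  refine ⟨fun h => hab (hinj h), fun x hx => ?_⟩
  have hfa := hf a
  have hfb := hf b
  have hua := hu a
  have hub := hu b
  have hua4 := hu4 a
  have hub4 := hu4 b
  rcases hx with hx | hx
  · have hx' : i ≤ (x : ℕ) ∧ (x : ℕ) < i + 4 := by simp only [PBtw, Fin.lt_def] at hx; omega
    have hxe : x = f ⟨x - i, by omega⟩ := Fin.ext (by rw [hf]; simp; omega)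
    refine ⟨⟨x - i, by omega⟩, h _ (Or.inl ?_), hxe.symm⟩
    simp only [PBtw, Fin.lt_def] at hx ⊢
    omega
  · have hx' : v ≤ (π.2 x : ℕ) ∧ (π.2 x : ℕ) < v + 4 := by
      simp only [PBtw, Fin.lt_def] at hx; omega
    obtain ⟨c, hc⟩ := hsurj (π.2 x - v) (by omega)
    have huc := hu c
    have hxe : x = f c := π.2.injective (Fin.ext (by omega))
    refine ⟨c, h _ (Or.inr ?_), hxe.symm⟩
    simp only [PBtw, Fin.lt_def] at hx
    omega

/-- The four symmetric cases, uniformly. -/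
theorem mu_zero_of_interval {σ π : PPerm} (hσ : AdjacencyFree σ)
    {f : Fin 4 → Fin π.1} {i v : ℕ} {u : Fin 4 → ℕ}
    (hf : ∀ a : Fin 4, (f a : ℕ) = i + (a : ℕ)) (hu : ∀ a, (π.2 (f a) : ℕ) = v + u a)
    (hcase : u = ![0, 1, 3, 2] ∨ u = ![1, 0, 2, 3] ∨ u = ![2, 3, 1, 0] ∨ u = ![3, 2, 0, 1]) :
    mu σ π = 0 := by
  have hinj : Function.Injective f := by
    intro x y hxy
    have h1 := hf x
    have h2 := hf y
    rw [hxy] at h1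
    exact Fin.ext (by omega)
  have hu4 : ∀ a, u a < 4 := by
    rcases hcase with rfl | rfl | rfl | rfl <;> decide
  have hsurj : ∀ k < 4, ∃ a, u a = k := by
    rcases hcase with rfl | rfl | rfl | rfl <;> decide
  have adj := fun s a b hab h => adjR_of_interval hf hu hsurj s a b hab h hu4
  have h01 : AdjR π ∅ (f 0) (f 1) := by
    rw [← Set.image_empty f]
    apply adj _ _ _ (by decide)
    rcases hcase with rfl | rfl | rfl | rfl <;> intro x <;> fin_cases x <;> simp [PBtw]
  have h23 : AdjR π ∅ (f 2) (f 3) := by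
    rw [← Set.image_empty f]
    apply adj _ _ _ (by decide)
    rcases hcase with rfl | rfl | rfl | rfl <;> intro x <;> fin_cases x <;> simp [PBtw]
  have hd : ∀ a b : Fin 4, a ≠ b → f a ≠ f b := fun a b h => hinj.ne h
  by_cases hc : u = ![0, 1, 3, 2] ∨ u = ![3, 2, 0, 1]
  · refine mu_zero_of_quad hσ _ π rfl (f 0) (f 1) (f 2) (f 3) (hd _ _ (by decide))
      (hd _ _ (by decide)) (hd _ _ (by decide)) h01 h23 ?_
    rw [← Set.image_singleton]
    apply adj _ _ _ (by decide)
    rcases hc with rfl | rfl <;> intro x <;> fin_cases x <;> simp [PBtw]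
  · have hc : u = ![1, 0, 2, 3] ∨ u = ![2, 3, 1, 0] := by tauto
    refine mu_zero_of_quad hσ _ π rfl (f 3) (f 2) (f 1) (f 0) (hd _ _ (by decide))
      (hd _ _ (by decide)) (hd _ _ (by decide)) h23.symm h01.symm ?_
    rw [← Set.image_singleton]
    apply adj _ _ _ (by decide)
    rcases hc with rfl | rfl <;> intro x <;> fin_cases x <;> simp [PBtw]

/-- If `σ` is adjacency-free and `π` contains an interval copy of one of the
symmetries `1243`, `2134`, `3421`, `4312` of `1243`, then `μ(σ,π) = 0`. -/
theorem mu_eq_zero_of_adjacencyFree_of_intervalCopy_1243 (σ π : PPerm)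
    (hσ : AdjacencyFree σ)
    (h : HasIntervalCopy π p1243 ∨ HasIntervalCopy π p2134 ∨
      HasIntervalCopy π p3421 ∨ HasIntervalCopy π p4312) :
    mu σ π = 0 := by
  rcases h with h | h | h | h <;> obtain ⟨f, i, v, hf, hv, ho⟩ := h
  · change Fin 4 → Fin π.1 at f
    refine mu_zero_of_interval hσ (f := f) (i := i) (v := v) (u := ![0, 1, 3, 2]) hf ?_ (by simp)
    change ∀ a : Fin 4, v ≤ (π.2 (f a) : ℕ) ∧ (π.2 (f a) : ℕ) < v + 4 at hv
    change ∀ a b : Fin 4, (![0, 1, 3, 2] : Fin 4 → Fin 4) a < (![0, 1, 3, 2] : Fin 4 → Fin 4) b ↔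
      π.2 (f a) < π.2 (f b) at ho
    have h0 : π.2 (f 0) < π.2 (f 1) := (ho 0 1).1 (by decide)
    have h1 : π.2 (f 1) < π.2 (f 3) := (ho 1 3).1 (by decide)
    have h2 : π.2 (f 3) < π.2 (f 2) := (ho 3 2).1 (by decide)
    have hlo := (hv 0).1
    have hhi := (hv 2).2
    intro a
    fin_cases a <;> simp <;> omega
  · change Fin 4 → Fin π.1 at f
    refine mu_zero_of_interval hσ (f := f) (i := i) (v := v) (u := ![1, 0, 2, 3]) hf ?_ (by simp)
    change ∀ a : Fin 4, v ≤ (π.2 (f a) : ℕ) ∧ (π.2 (f a) : ℕ) < v + 4 at hv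
    change ∀ a b : Fin 4, (![1, 0, 2, 3] : Fin 4 → Fin 4) a < (![1, 0, 2, 3] : Fin 4 → Fin 4) b ↔
      π.2 (f a) < π.2 (f b) at ho
    have h0 : π.2 (f 1) < π.2 (f 0) := (ho 1 0).1 (by decide)
    have h1 : π.2 (f 0) < π.2 (f 2) := (ho 0 2).1 (by decide)
    have h2 : π.2 (f 2) < π.2 (f 3) := (ho 2 3).1 (by decide)
    have hlo := (hv 1).1
    have hhi := (hv 3).2
    intro a
    fin_cases a <;> simp <;> omega
  · change Fin 4 → Fin π.1 at f
    refine mu_zero_of_interval hσ (f := f) (i := i) (v := v) (u := ![2, 3, 1, 0]) hf ?_ (by simp)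
    change ∀ a : Fin 4, v ≤ (π.2 (f a) : ℕ) ∧ (π.2 (f a) : ℕ) < v + 4 at hv
    change ∀ a b : Fin 4, (![2, 3, 1, 0] : Fin 4 → Fin 4) a < (![2, 3, 1, 0] : Fin 4 → Fin 4) b ↔
      π.2 (f a) < π.2 (f b) at ho
    have h0 : π.2 (f 3) < π.2 (f 2) := (ho 3 2).1 (by decide)
    have h1 : π.2 (f 2) < π.2 (f 0) := (ho 2 0).1 (by decide)
    have h2 : π.2 (f 0) < π.2 (f 1) := (ho 0 1).1 (by decide)
    have hlo := (hv 3).1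
    have hhi := (hv 1).2
    intro a
    fin_cases a <;> simp <;> omega
  · change Fin 4 → Fin π.1 at f
    refine mu_zero_of_interval hσ (f := f) (i := i) (v := v) (u := ![3, 2, 0, 1]) hf ?_ (by simp)
    change ∀ a : Fin 4, v ≤ (π.2 (f a) : ℕ) ∧ (π.2 (f a) : ℕ) < v + 4 at hv
    change ∀ a b : Fin 4, (![3, 2, 0, 1] : Fin 4 → Fin 4) a < (![3, 2, 0, 1] : Fin 4 → Fin 4) b ↔
      π.2 (f a) < π.2 (f b) at ho
    have h0 : π.2 (f 2) < π.2 (f 3) := (ho 2 3).1 (by decide)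
    have h1 : π.2 (f 3) < π.2 (f 1) := (ho 3 1).1 (by decide)
    have h2 : π.2 (f 1) < π.2 (f 0) := (ho 1 0).1 (by decide)
    have hlo := (hv 2).1
    have hhi := (hv 0).2
    intro a
    fin_cases a <;> simp <;> omega
end

section
/- Let σ be an adjacency-free permutation of length n and let π = σ[α₁,…,αₙ] be an inflation of σ in which every αᵢ is one of the permutations 1, 12, 21, and at least one αᵢ has length 2 (so that π ≠ σ). Then μ(σ,π) = (−1)^{|π|−|σ|}; in particular μ(σ,π) ≠ 0. -/
/-!
The permutation pattern poset and its Möbius function.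

A permutation of length `n` is represented as an element of the symmetric
group on `Fin n`; the collection of all permutations of all lengths is the
sigma type `PPerm`.  Pattern containment `PPerm.Le` makes `PPerm` into the
permutation pattern poset, and `mu` is its Möbius function, defined by the
usual recursion `μ(σ,σ) = 1`, `μ(σ,π) = -∑_{σ ≤ λ < π} μ(σ,λ)` for `σ < π`
and `μ(σ,π) = 0` otherwise.
-/

open scoped Classical

/-- The permutation `12`. -/
def p12 : PPerm := ⟨2, 1⟩

/-- The permutation `21`. -/
noncomputable def p21 : PPerm := ⟨2, Equiv.swap 0 1⟩

/-- `π` is the inflation `σ[α₁,…,αₙ]` of `σ` by the (nonempty) permutations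
`α i`: each entry `σ(i)` of `σ` is replaced by an interval of entries
order-isomorphic to `α i`, the intervals being ordered relative to one
another as the corresponding entries of `σ`.  Concretely, the block of `α i`
occupies the positions starting after all blocks of earlier positions, and
its values sit above all blocks with smaller `σ`-values. -/
def IsInflation (σ : PPerm) (α : Fin σ.1 → PPerm) (π : PPerm) : Prop :=
  π.1 = ∑ i : Fin σ.1, (α i).1 ∧
    ∀ (i : Fin σ.1) (t : Fin (α i).1) (p : Fin π.1),
      (p : ℕ) =
          (∑ k ∈ Finset.univ.filter fun k : Fin σ.1 => (k : ℕ) < (i : ℕ), (α k).1) +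
            (t : ℕ) →
      (π.2 p : ℕ) =
        (∑ k ∈ Finset.univ.filter fun k : Fin σ.1 => σ.2 k < σ.2 i, (α k).1) +
          ((α i).2 t : ℕ)

/-- `f` realises `σ` as a pattern of `π`. -/
def Emb (σ π : PPerm) (f : Fin σ.1 → Fin π.1) : Prop :=
  StrictMono f ∧ ∀ a b : Fin σ.1, σ.2 a < σ.2 b ↔ π.2 (f a) < π.2 (f b)

/-- `b` exhibits `π` as an inflation of `σ` with all blocks of size at most two. -/
structure BM (σ π : PPerm) (b : Fin π.1 → Fin σ.1) : Prop where
  mono : Monotone b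
  surj : Function.Surjective b
  fib : ∀ p q, b p = b q → p < q → (q : ℕ) = (p : ℕ) + 1
  ord : ∀ p q, σ.2 (b p) < σ.2 (b q) → π.2 p < π.2 q

theorem Emb.comp {σ τ π : PPerm} {f : Fin σ.1 → Fin τ.1} {g : Fin τ.1 → Fin π.1}
    (hg : Emb τ π g) (hf : Emb σ τ f) : Emb σ π (g ∘ f) :=
  ⟨hg.1.comp hf.1, fun a b => (hf.2 a b).trans (hg.2 _ _)⟩

theorem emb_factor {σ τ π : PPerm} {e : Fin σ.1 → Fin π.1} {g : Fin τ.1 → Fin π.1}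
    (he : Emb σ π e) (hg : Emb τ π g) (h : ∀ x, ∃ y, g y = e x) : PPerm.Le σ τ := by
  choose f hf using h
  refine ⟨f, ?_, ?_⟩
  · intro x y hxy
    rw [← hg.1.lt_iff_lt, hf, hf]
    exact he.1 hxy
  · intro x y
    rw [hg.2, hf, hf]
    exact he.2 x y

theorem strictMono_fin_self {n : ℕ} (f : Fin n → Fin n) (hf : StrictMono f) : f = id := by
  have h1 : ∀ x, x ≤ f x := fun x => hf.le_apply
  have hb : Function.Bijective f := Finite.injective_iff_bijective.mp hf.injective
  let e : Fin n ≃o Fin n := hf.orderIsoOfSurjective f hb.2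
  have : e = OrderIso.refl _ := Subsingleton.elim _ _
  funext x
  exact congrArg (fun k : Fin n ≃o Fin n => k x) this

theorem eq_of_le {σ π : PPerm} (h : PPerm.Le σ π) (hl : σ.1 = π.1) : σ = π := by
  obtain ⟨n, s⟩ := σ
  obtain ⟨m, t⟩ := π
  simp only at hl
  subst hl
  obtain ⟨f, hf, ho⟩ := h
  have := strictMono_fin_self f hf
  subst this
  simp only [id] at ho
  have hm : StrictMono (fun x => t (s.symm x)) := by
    intro x y hxy
    have := (ho (s.symm x) (s.symm y)).1 (by simpa using hxy)
    simpa using this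
  have h2 := strictMono_fin_self _ hm
  congr 1
  ext x
  have := congrFun h2 (s x)
  simp at this
  rw [this]

/-- consecutive values from the absence of intermediate values -/
theorem consec {σ : PPerm} {x y : Fin σ.1} (h : σ.2 x < σ.2 y)
    (hn : ∀ z, σ.2 x < σ.2 z → σ.2 z < σ.2 y → False) :
    (σ.2 y : ℕ) = (σ.2 x : ℕ) + 1 := by
  by_contra hc
  have h' : (σ.2 x : ℕ) < σ.2 y := h
  have hlt : (σ.2 x : ℕ) + 1 < σ.1 := by have := (σ.2 y).2; omega
  apply hn (σ.2.symm ⟨(σ.2 x : ℕ) + 1, hlt⟩)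
  · rw [Equiv.apply_symm_apply, Fin.lt_def]; simp
  · rw [Equiv.apply_symm_apply, Fin.lt_def]; simp only; omega

theorem BM.between {σ π : PPerm} {b : Fin π.1 → Fin σ.1} (h : BM σ π b) {p q r : Fin π.1}
    (hpq : b p = b q) (h1 : π.2 p < π.2 r) (h2 : π.2 r < π.2 q) : b r = b p := by
  apply σ.2.injective
  rcases lt_trichotomy (σ.2 (b r)) (σ.2 (b p)) with hh | hh | hh
  · exact absurd (h.ord _ _ hh) (lt_asymm h1)
  · exact hh
  · rw [hpq] at hh
    exact absurd (h.ord _ _ hh) (lt_asymm h2)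

theorem BM.three {σ π : PPerm} {b : Fin π.1 → Fin σ.1} (h : BM σ π b) {p q r : Fin π.1}
    (hpq : b p = b q) (hlt : p < q) (hr : b r = b p) : r = p ∨ r = q := by
  have e1 := h.fib p q hpq hlt
  rcases lt_trichotomy r p with hh | hh | hh
  · have e2 := h.fib r p hr hh
    have e3 := h.fib r q (hr.trans hpq) (hh.trans hlt)
    omega
  · exact Or.inl hh
  · have e2 := h.fib p r hr.symm hh
    right; ext; omega

theorem BM.ord_iff {σ π : PPerm} {b : Fin π.1 → Fin σ.1} (h : BM σ π b) {p q : Fin π.1}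
    (hne : b p ≠ b q) : π.2 p < π.2 q ↔ σ.2 (b p) < σ.2 (b q) := by
  refine ⟨fun hh => ?_, h.ord p q⟩
  by_contra hc
  have : σ.2 (b q) < σ.2 (b p) :=
    lt_of_le_of_ne (not_lt.1 hc) (fun e => hne (σ.2.injective e).symm)
  exact lt_asymm hh (h.ord _ _ this)

theorem BM.sub {σ τ π : PPerm} (hσ : AdjacencyFree σ) {b : Fin π.1 → Fin σ.1} (h : BM σ π b)
    {g : Fin τ.1 → Fin π.1} (hg : Emb τ π g) (hf : PPerm.Le σ τ) : BM σ τ (b ∘ g) := by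
  obtain ⟨f, hf⟩ := hf
  have he : Emb σ π (g ∘ f) := hg.comp hf
  set e := g ∘ f with hedef
  have key : ∀ x y, x < y → b (e x) ≠ b (e y) := by
    intro x y hxy hb
    have hexy : e x < e y := he.1 hxy
    have e1 := h.fib _ _ hb hexy
    apply hσ x
    refine ⟨y, ?_, ?_⟩
    · by_contra hc
      have hlt : (x : ℕ) + 1 < y := by
        have : (x : ℕ) < y := hxy
        omega
      let z : Fin σ.1 := ⟨(x : ℕ) + 1, hlt.trans y.2⟩
      have h1 : e x < e z := he.1 (show (x : ℕ) < x + 1 by omega)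
      have h2 : e z < e y := he.1 hlt
      rw [Fin.lt_def] at h1 h2
      omega
    · rcases lt_trichotomy (σ.2 x) (σ.2 y) with hh | hh | hh
      · left
        apply consec hh
        intro z hz1 hz2
        have := h.between hb ((he.2 _ _).1 hz1) ((he.2 _ _).1 hz2)
        rcases h.three hb hexy this with hz | hz
        · rw [he.1.injective hz] at hz1; exact lt_irrefl _ hz1
        · rw [he.1.injective hz] at hz2; exact lt_irrefl _ hz2
      · exact absurd (σ.2.injective hh) hxy.ne
      · right
        apply consec hh
        intro z hz1 hz2
        have := h.between hb.symm ((he.2 _ _).1 hz1) ((he.2 _ _).1 hz2)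
        rcases h.three hb hexy (this.trans hb.symm) with hz | hz
        · rw [he.1.injective hz] at hz2; exact lt_irrefl _ hz2
        · rw [he.1.injective hz] at hz1; exact lt_irrefl _ hz1
  have hinj : Function.Injective (fun x => b (e x)) := by
    intro x y hxy
    rcases lt_trichotomy x y with hh | hh | hh
    · exact absurd hxy (key x y hh)
    · exact hh
    · exact absurd hxy.symm (key y x hh)
  have hsurj : Function.Surjective (fun x => b (e x)) := Finite.surjective_of_injective hinj
  refine ⟨h.mono.comp hg.1.monotone, ?_, ?_, ?_⟩
  · intro i
    obtain ⟨x, hx⟩ := hsurj i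
    exact ⟨f x, hx⟩
  · intro p q hpq hlt
    have e1 := h.fib _ _ hpq (hg.1 hlt)
    by_contra hc
    have hlt' : (p : ℕ) + 1 < q := by
      have : (p : ℕ) < q := hlt
      omega
    let z : Fin τ.1 := ⟨(p : ℕ) + 1, hlt'.trans q.2⟩
    have h1 : g p < g z := hg.1 (show (p : ℕ) < p + 1 by omega)
    have h2 : g z < g q := hg.1 hlt'
    rw [Fin.lt_def] at h1 h2
    omega
  · intro p q hpq
    exact (hg.2 _ _).2 (h.ord _ _ hpq)

theorem BM.step {σ π : PPerm} {b : Fin π.1 → Fin σ.1} (h : BM σ π b) {p q : Fin π.1}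
    (hq : (q : ℕ) = p + 1) (hne : b p ≠ b q) : (b q : ℕ) = b p + 1 := by
  have hle : b p ≤ b q := h.mono (by rw [Fin.le_def]; omega)
  have hlt : (b p : ℕ) < b q := Fin.lt_def.1 (lt_of_le_of_ne hle hne)
  by_contra hc
  obtain ⟨r, hr⟩ := h.surj ⟨(b p : ℕ) + 1, by have := (b q).2; omega⟩
  have hr' : (b r : ℕ) = b p + 1 := by rw [hr]
  rcases le_or_gt r p with hh | hh
  · have : (b r : ℕ) ≤ b p := h.mono hh
    omega
  · have : (b q : ℕ) ≤ b r := h.mono (by rw [Fin.le_def]; rw [Fin.lt_def] at hh; omega)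
    omega

theorem BM.adj {σ π : PPerm} (hσ : AdjacencyFree σ) {b : Fin π.1 → Fin σ.1} (h : BM σ π b)
    {p q : Fin π.1} (hq : (q : ℕ) = p + 1) : b p = b q ↔ AdjAtPos π p := by
  have hpq : p < q := by rw [Fin.lt_def]; omega
  constructor
  · intro hb
    refine ⟨q, hq, ?_⟩
    rcases lt_trichotomy (π.2 p) (π.2 q) with hh | hh | hh
    · left
      apply consec hh
      intro z hz1 hz2
      rcases h.three hb hpq (h.between hb hz1 hz2) with hz | hz
      · rw [hz] at hz1; exact lt_irrefl _ hz1
      · rw [hz] at hz2; exact lt_irrefl _ hz2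
    · exact absurd (π.2.injective hh) hpq.ne
    · right
      apply consec hh
      intro z hz1 hz2
      rcases h.three hb hpq ((h.between hb.symm hz1 hz2).trans hb.symm) with hz | hz
      · rw [hz] at hz2; exact lt_irrefl _ hz2
      · rw [hz] at hz1; exact lt_irrefl _ hz1
  · rintro ⟨q', hq', hadj⟩
    have : q' = q := by ext; omega
    subst this
    by_contra hne
    apply hσ (b p)
    refine ⟨b q', h.step hq' hne, ?_⟩
    rcases hadj with ha | ha
    · left
      have hlt : π.2 p < π.2 q' := by rw [Fin.lt_def]; omega
      apply consec ((h.ord_iff hne).1 hlt)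
      intro z hz1 hz2
      obtain ⟨r, rfl⟩ := h.surj z
      have h1 := h.ord _ _ hz1
      have h2 := h.ord _ _ hz2
      rw [Fin.lt_def] at h1 h2
      omega
    · right
      have hlt : π.2 q' < π.2 p := by rw [Fin.lt_def]; omega
      apply consec ((h.ord_iff (Ne.symm hne)).1 hlt)
      intro z hz1 hz2
      obtain ⟨r, rfl⟩ := h.surj z
      have h1 := h.ord _ _ hz1
      have h2 := h.ord _ _ hz2
      rw [Fin.lt_def] at h1 h2
      omega

theorem BM.zero {σ π : PPerm} {b : Fin π.1 → Fin σ.1} (h : BM σ π b)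
    {p : Fin π.1} (hp : (p : ℕ) = 0) : (b p : ℕ) = 0 := by
  obtain ⟨r, hr⟩ := h.surj ⟨0, by have := (b p).2; omega⟩
  have : (b p : ℕ) ≤ b r := h.mono (by rw [Fin.le_def]; omega)
  rw [hr] at this
  simpa using this

theorem BM.unique {σ π : PPerm} (hσ : AdjacencyFree σ) {b b' : Fin π.1 → Fin σ.1} (h : BM σ π b)
    (h' : BM σ π b') : b = b' := by
  have key : ∀ k (hk : k < π.1), b ⟨k, hk⟩ = b' ⟨k, hk⟩ := by
    intro k
    induction k with
    | zero =>
      intro hk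
      ext
      rw [h.zero rfl, h'.zero rfl]
    | succ k ih =>
      intro hk
      have hk0 : k < π.1 := by omega
      have ih := ih hk0
      have hs : ((⟨k + 1, hk⟩ : Fin π.1) : ℕ) = ((⟨k, hk0⟩ : Fin π.1) : ℕ) + 1 := rfl
      by_cases ha : AdjAtPos π ⟨k, hk0⟩
      · rw [← (h.adj hσ hs).2 ha, ← (h'.adj hσ hs).2 ha, ih]
      · ext
        rw [h.step hs (fun e => ha ((h.adj hσ hs).1 e)),
          h'.step hs (fun e => ha ((h'.adj hσ hs).1 e)), ih]
  funext p
  exact key p p.2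

/-- indices of blocks of size two -/
noncomputable def dbl {m n : ℕ} (b : Fin m → Fin n) : Finset (Fin n) :=
  Finset.univ.filter fun i => ∃ p q, p < q ∧ b p = i ∧ b q = i

theorem BM.card {σ π : PPerm} {b : Fin π.1 → Fin σ.1} (h : BM σ π b) :
    π.1 = σ.1 + (dbl b).card := by
  have h1 : (Finset.univ : Finset (Fin π.1)).card
      = ∑ i : Fin σ.1, (Finset.univ.filter fun p => b p = i).card :=
    Finset.card_eq_sum_card_fiberwise (fun x _ => Finset.mem_coe.2 (Finset.mem_univ _))
  have h2 : ∀ i : Fin σ.1, (Finset.univ.filter fun p => b p = i).card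
      = 1 + if i ∈ dbl b then 1 else 0 := by
    intro i
    split_ifs with hi
    · simp only [dbl, Finset.mem_filter, Finset.mem_univ, true_and] at hi
      obtain ⟨p, q, hpq, hp, hq⟩ := hi
      have : (Finset.univ.filter fun p => b p = i) = {p, q} := by
        ext r
        simp only [Finset.mem_filter, Finset.mem_univ, true_and, Finset.mem_insert,
          Finset.mem_singleton]
        constructor
        · intro hr
          exact h.three (hp.trans hq.symm) hpq (hr.trans hp.symm)
        · rintro (rfl | rfl) <;> assumption
      rw [this, Finset.card_pair hpq.ne]
    · obtain ⟨p, hp⟩ := h.surj i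
      rw [Nat.add_zero, Finset.card_eq_one]
      refine ⟨p, ?_⟩
      ext r
      simp only [Finset.mem_filter, Finset.mem_univ, true_and, Finset.mem_singleton]
      constructor
      · intro hr
        by_contra hne
        apply hi
        simp only [dbl, Finset.mem_filter, Finset.mem_univ, true_and]
        rcases lt_or_gt_of_ne hne with hh | hh
        · exact ⟨r, p, hh, hr, hp⟩
        · exact ⟨p, r, hh, hp, hr⟩
      · rintro rfl; exact hp
  rw [Finset.card_univ, Fintype.card_fin] at h1
  refine h1.trans ?_
  rw [Finset.sum_congr rfl (fun i _ => h2 i), Finset.sum_add_distrib]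
  simp

theorem exists_pat (π : PPerm) (K : Finset (Fin π.1)) :
    ∃ (τ : PPerm) (g : Fin τ.1 → Fin π.1), Emb τ π g ∧ ∀ p, (∃ x, g x = p) ↔ p ∈ K := by
  let e := K.orderIsoOfFin rfl
  let V := K.map π.2.toEmbedding
  let v := V.orderIsoOfFin (k := K.card) (Finset.card_map _)
  let m : K ≃ V := π.2.subtypeEquiv (fun a => by simp [V])
  refine ⟨⟨K.card, (e.toEquiv.trans m).trans v.symm.toEquiv⟩, fun x => (e x : Fin π.1),
    ⟨?_, ?_⟩, ?_⟩
  · intro x y hxy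
    exact e.lt_iff_lt.2 hxy
  · intro x y
    change v.symm (m (e x)) < v.symm (m (e y)) ↔ _
    rw [v.symm.lt_iff_lt]
    rfl
  · intro p
    constructor
    · rintro ⟨x, rfl⟩; exact (e x).2
    · intro hp; exact ⟨e.symm ⟨p, hp⟩, by simp⟩

/-- the chosen section of a block map -/
theorem BM.first {σ π : PPerm} {b : Fin π.1 → Fin σ.1} (h : BM σ π b) (i : Fin σ.1) :
    ∃ p, b p = i ∧ ∀ q, q < p → b q ≠ i := by
  obtain ⟨p, hp⟩ := h.surj i
  have hne : (Finset.univ.filter fun p => b p = i).Nonempty := ⟨p, by simpa using hp⟩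
  refine ⟨Finset.min' _ hne, ?_, ?_⟩
  · have := Finset.min'_mem _ hne
    simpa using this
  · intro q hq hb
    exact absurd (Finset.min'_le _ q (by simpa using hb)) (not_le.2 hq)

/-- any section is an embedding -/
theorem BM.sec {σ π : PPerm} {b : Fin π.1 → Fin σ.1} (h : BM σ π b) {s : Fin σ.1 → Fin π.1}
    (hs : ∀ i, b (s i) = i) : Emb σ π s := by
  constructor
  · intro i j hij
    by_contra hc
    have := h.mono (not_lt.1 hc)
    rw [hs, hs] at this
    exact absurd hij (not_lt.2 this)
  · intro i j
    by_cases hij : i = j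
    · subst hij; simp
    · rw [h.ord_iff (by rwa [hs, hs]), hs, hs]

/-- kept positions -/
noncomputable def keep {m n : ℕ} (b : Fin m → Fin n) (S : Finset (Fin n)) : Finset (Fin m) :=
  Finset.univ.filter fun p => b p ∈ S ∨ ∀ q, q < p → b q ≠ b p

theorem muAux_of_BM {σ : PPerm} (hσ : AdjacencyFree σ) (n : ℕ) :
    ∀ (π : PPerm) (b : Fin π.1 → Fin σ.1), BM σ π b → π.1 < n →
      muAux n σ π = (-1) ^ (π.1 - σ.1) := by
  induction n with
  | zero => intro π b _ h; omega
  | succ n ih =>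
    intro π b h hn
    have hcard := h.card
    choose s hs hsmin using h.first
    have hle : PPerm.Le σ π := ⟨s, h.sec hs⟩
    rw [muAux]
    by_cases heq : σ = π
    · rw [if_pos heq, ← heq]; simp
    rw [if_neg heq, if_pos hle]
    have hD : (dbl b).Nonempty := by
      rw [Finset.nonempty_iff_ne_empty]
      intro he
      rw [he] at hcard
      exact heq (eq_of_le hle (by simpa using hcard.symm))
    -- the family of patterns
    choose Φ g hg hrange using fun S : Finset (Fin σ.1) => exists_pat π (keep b S)
    have hΦle : ∀ S, PPerm.Le σ (Φ S) := by
      intro S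
      apply emb_factor (h.sec hs) (hg S)
      intro x
      rw [hrange]
      simp only [keep, Finset.mem_filter, Finset.mem_univ, true_and]
      right
      intro q hq
      rw [hs]
      exact hsmin x q hq
    have hΦbm : ∀ S, BM σ (Φ S) (b ∘ g S) := fun S => h.sub hσ (hg S) (hΦle S)
    have hdbl : ∀ S, S ⊆ dbl b → dbl (b ∘ g S) = S := by
      intro S hS
      ext i
      simp only [dbl, Finset.mem_filter, Finset.mem_univ, true_and]
      constructor
      · rintro ⟨p, q, hpq, hp, hq⟩
        have := (hrange S (g S q)).1 ⟨q, rfl⟩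
        simp only [keep, Finset.mem_filter, Finset.mem_univ, true_and] at this
        rcases this with hh | hh
        · rw [← hq]; exact hh
        · exact absurd (hp.trans hq.symm) (hh (g S p) ((hg S).1 hpq))
      · intro hi
        have := hS hi
        simp only [dbl, Finset.mem_filter, Finset.mem_univ, true_and] at this
        obtain ⟨p, q, hpq, hp, hq⟩ := this
        obtain ⟨x, hx⟩ := (hrange S p).2 (by simp [keep, hp, hi])
        obtain ⟨y, hy⟩ := (hrange S q).2 (by simp [keep, hq, hi])
        refine ⟨x, y, ?_, by simp [hx, hp], by simp [hy, hq]⟩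
        rw [← (hg S).1.lt_iff_lt, hx, hy]
        exact hpq
    have hlen : ∀ S, S ⊆ dbl b → (Φ S).1 = σ.1 + S.card := by
      intro S hS
      rw [(hΦbm S).card, hdbl S hS]
    have hsum : ∑ m ∈ Finset.range π.1,
          ∑ p ∈ Finset.univ.filter
              (fun p : Equiv.Perm (Fin m) => PPerm.Le σ ⟨m, p⟩ ∧ PPerm.Le ⟨m, p⟩ π),
            muAux n σ ⟨m, p⟩ = ∑ S ∈ (dbl b).ssubsets, (-1 : ℤ) ^ S.card := by
      rw [Finset.sum_sigma']
      symm
      apply Finset.sum_nbij Φ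
      · intro S hS
        have hS := Finset.mem_ssubsets.1 hS
        simp only [Finset.mem_sigma, Finset.mem_range, Finset.mem_filter, Finset.mem_univ,
          true_and]
        refine ⟨?_, hΦle S, ⟨g S, hg S⟩⟩
        have := Finset.card_lt_card hS
        rw [hlen S hS.subset]
        omega
      · intro S hS T hT hST
        have hS := (Finset.mem_ssubsets.1 (Finset.mem_coe.1 hS)).subset
        have hT := (Finset.mem_ssubsets.1 (Finset.mem_coe.1 hT)).subset
        have aux : ∀ (A B : PPerm) (u : Fin A.1 → Fin σ.1) (v : Fin B.1 → Fin σ.1),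
            A = B → BM σ A u → BM σ B v → dbl u = dbl v := by
          rintro A B u v rfl hu hv
          rw [hu.unique hσ hv]
        rw [← hdbl S hS, ← hdbl T hT]
        exact aux _ _ _ _ hST (hΦbm S) (hΦbm T)
      · intro τ hτ
        have hτ := Finset.mem_coe.1 hτ
        simp only [Finset.mem_sigma, Finset.mem_range, Finset.mem_filter, Finset.mem_univ,
          true_and] at hτ
        obtain ⟨hlt, hστ, k, hk⟩ := hτ
        have hk : Emb τ π k := hk
        have hbm : BM σ τ (b ∘ k) := h.sub hσ hk hστ
        have hsub : dbl (b ∘ k) ⊆ dbl b := by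
          intro i hi
          simp only [dbl, Finset.mem_filter, Finset.mem_univ, true_and] at hi ⊢
          obtain ⟨p, q, hpq, hp, hq⟩ := hi
          exact ⟨k p, k q, hk.1 hpq, hp, hq⟩
        have hc := hbm.card
        refine ⟨dbl (b ∘ k), ?_, ?_⟩
        · rw [Finset.mem_coe, Finset.mem_ssubsets]
          refine Finset.ssubset_iff_subset_ne.2 ⟨hsub, ?_⟩
          intro e
          rw [e] at hc
          omega
        · symm
          apply eq_of_le _ (hc.trans (hlen _ hsub).symm)
          set S := dbl (b ∘ k) with hSdef
          let k' : Fin τ.1 → Fin π.1 := fun p => if b (k p) ∈ S then k p else s (b (k p))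
          have hbk' : ∀ p, b (k' p) = b (k p) := by
            intro p
            simp only [k']
            split_ifs
            · rfl
            · exact hs _
          have hk' : ∀ p q, p ≠ q → b (k p) = b (k q) → k' p = k p ∧ k' q = k q := by
            intro p q hne hb
            have hm : b (k p) ∈ S := by
              simp only [hSdef, dbl, Finset.mem_filter, Finset.mem_univ, true_and]
              rcases lt_or_gt_of_ne hne with hh | hh
              · exact ⟨p, q, hh, rfl, hb.symm⟩
              · exact ⟨q, p, hh, hb.symm, rfl⟩
            simp only [k']
            rw [if_pos hm, if_pos (hb ▸ hm)]
            exact ⟨rfl, rfl⟩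
          have hemb : Emb τ π k' := by
            constructor
            · intro p q hpq
              by_cases hb : b (k p) = b (k q)
              · obtain ⟨e1, e2⟩ := hk' p q hpq.ne hb
                rw [e1, e2]; exact hk.1 hpq
              · have hlt : b (k p) < b (k q) :=
                  lt_of_le_of_ne (h.mono (hk.1.monotone hpq.le)) hb
                by_contra hcon
                have := h.mono (not_lt.1 hcon)
                rw [hbk', hbk'] at this
                exact absurd hlt (not_lt.2 this)
            · intro p q
              by_cases hpq : p = q
              · subst hpq; simp
              by_cases hb : b (k p) = b (k q)
              · obtain ⟨e1, e2⟩ := hk' p q hpq hb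
                rw [e1, e2]; exact hk.2 p q
              · rw [h.ord_iff (by rwa [hbk', hbk']), hbk', hbk', hk.2, h.ord_iff hb]
          apply emb_factor hemb (hg S)
          intro x
          rw [hrange]
          simp only [keep, Finset.mem_filter, Finset.mem_univ, true_and]
          rw [hbk']
          by_cases hx : b (k x) ∈ S
          · exact Or.inl hx
          · right
            intro q hq
            apply hsmin _ q
            simpa only [k', if_neg hx] using hq
      · intro S hS
        have hS := Finset.mem_ssubsets.1 hS
        have hl := hlen S hS.subset
        have hcl := Finset.card_lt_card hS
        have := ih (Φ S) _ (hΦbm S) (by omega)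
        change _ = muAux n σ (Φ S)
        rw [this, hl]
        congr 1
        omega
    rw [hsum]
    have htot := Finset.sum_powerset_neg_one_pow_card_of_nonempty hD
    have hsplit : (dbl b).ssubsets = (dbl b).powerset.erase (dbl b) := rfl
    have := Finset.sum_erase_add (dbl b).powerset (fun S => (-1 : ℤ) ^ S.card)
      (Finset.mem_powerset_self (dbl b))
    rw [htot] at this
    rw [hsplit, show π.1 - σ.1 = (dbl b).card by omega]
    linarith

theorem BM_of_inflation {σ π : PPerm} (α : Fin σ.1 → PPerm)
    (hα : ∀ i, (α i).1 = 1 ∨ (α i).1 = 2) (hπ : IsInflation σ α π) :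
    ∃ b, BM σ π b := by
  obtain ⟨hlen, hval⟩ := hπ
  let P : ℕ → ℕ := fun j => ∑ k ∈ Finset.univ.filter fun k : Fin σ.1 => (k : ℕ) < j, (α k).1
  have hP : ∀ i j : ℕ, i ≤ j → P i ≤ P j := by
    intro i j hij
    apply Finset.sum_le_sum_of_subset
    intro k hk
    simp only [Finset.mem_filter, Finset.mem_univ, true_and] at hk ⊢
    omega
  have hP1 : ∀ i : Fin σ.1, P (i + 1) = P i + (α i).1 := by
    intro i
    have : (Finset.univ.filter fun k : Fin σ.1 => (k : ℕ) < (i : ℕ) + 1)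
        = insert i (Finset.univ.filter fun k : Fin σ.1 => (k : ℕ) < (i : ℕ)) := by
      ext k
      simp only [Finset.mem_filter, Finset.mem_univ, true_and, Finset.mem_insert, Fin.ext_iff]
      omega
    simp only [P]
    rw [this, Finset.sum_insert (by simp)]
    omega
  have hPn : P σ.1 = π.1 := by
    rw [hlen]
    simp [P]
  have hP0 : P 0 = 0 := by simp [P]
  have hex : ∀ p : Fin π.1, ∃ i : Fin σ.1, P i ≤ p ∧ (p : ℕ) < P (i + 1) := by
    intro p
    have hx : ∃ j, (p : ℕ) < P j := ⟨σ.1, by rw [hPn]; exact p.2⟩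
    have h1 := Nat.find_spec hx
    have h2 := Nat.find_min' hx (m := σ.1) (by rw [hPn]; exact p.2)
    have h3 := fun m => Nat.find_min hx (m := m)
    generalize Nat.find hx = j at *
    cases j with
    | zero => rw [hP0] at h1; omega
    | succ j => exact ⟨⟨j, by omega⟩, not_lt.1 (h3 j (by omega)), h1⟩
  choose b hb1 hb2 using hex
  have hv : ∀ p : Fin π.1, ∃ t : ℕ, t < (α (b p)).1 ∧ (π.2 p : ℕ) =
      (∑ k ∈ Finset.univ.filter fun k : Fin σ.1 => σ.2 k < σ.2 (b p), (α k).1) + t := by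
    intro p
    have h1 := hb1 p
    have h2 := hb2 p
    rw [hP1] at h2
    have := hval (b p) ⟨(p : ℕ) - P (b p), by omega⟩ p (by
      change (p : ℕ) = P (b p) + ((p : ℕ) - P (b p)); omega)
    exact ⟨_, Fin.is_lt _, this⟩
  have hmono : Monotone b := by
    intro p q hpq
    by_contra hc
    have hlt : (b q : ℕ) + 1 ≤ b p := not_le.1 hc
    have := hP _ _ hlt
    have h1 := hb1 p
    have h2 := hb2 q
    rw [Fin.le_def] at hpq
    omega
  refine ⟨b, hmono, ?_, ?_, ?_⟩
  · intro i
    have h1 := hP1 i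
    have h2 := hP (i + 1) σ.1 i.2
    have h3 := hα i
    have hpl : P i < π.1 := by omega
    refine ⟨⟨P i, hpl⟩, ?_⟩
    have e1 := hb1 ⟨P i, hpl⟩
    have e2 := hb2 ⟨P i, hpl⟩
    simp only at e1 e2
    generalize b ⟨P i, hpl⟩ = j at *
    rcases lt_trichotomy j i with hh | hh | hh
    · have := hP (j + 1) i hh
      omega
    · exact hh
    · have := hP (i + 1) j hh
      omega
  · intro p q hpq hlt
    have e1 := hb1 p
    have e2 := hb2 q
    rw [← hpq, hP1] at e2
    have h3 := hα (b p)
    rw [Fin.lt_def] at hlt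
    omega
  · intro p q hpq
    obtain ⟨t, ht, hpv⟩ := hv p
    obtain ⟨u, hu, hqv⟩ := hv q
    rw [Fin.lt_def, hpv, hqv]
    have : (∑ k ∈ insert (b p) (Finset.univ.filter fun k : Fin σ.1 => σ.2 k < σ.2 (b p)),
        (α k).1) ≤ ∑ k ∈ Finset.univ.filter fun k : Fin σ.1 => σ.2 k < σ.2 (b q), (α k).1 := by
      apply Finset.sum_le_sum_of_subset
      intro k hk
      simp only [Finset.mem_filter, Finset.mem_univ, true_and, Finset.mem_insert] at hk ⊢
      rcases hk with rfl | hk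
      · exact hpq
      · exact hk.trans hpq
    rw [Finset.sum_insert (by simp)] at this
    omega

/-- If `σ` is adjacency-free and `π = σ[α₁,…,αₙ]` is an inflation of `σ` in
which every `αᵢ` is one of `1`, `12`, `21`, with at least one `αᵢ` of length
two, then `μ(σ,π) = (−1)^{|π|−|σ|}`; in particular `μ(σ,π) ≠ 0`. -/
theorem mu_of_inflation_by_singletons_and_adjacencies (σ π : PPerm)
    (hσ : AdjacencyFree σ) (α : Fin σ.1 → PPerm)
    (hα : ∀ i, α i = PPerm.one ∨ α i = p12 ∨ α i = p21)
    (h2 : ∃ i, (α i).1 = 2)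
    (hπ : IsInflation σ α π) :
    mu σ π = (-1) ^ (π.1 - σ.1) ∧ mu σ π ≠ 0 := by
  obtain ⟨b, hb⟩ := BM_of_inflation α (fun i => by
    rcases hα i with h | h | h <;> rw [h]
    · left; rfl
    · right; rfl
    · right; rfl) hπ
  have h := muAux_of_BM hσ (π.1 + 1) π b hb (Nat.lt_succ_self _)
  have h' : mu σ π = (-1) ^ (π.1 - σ.1) := h
  refine ⟨h', ?_⟩
  rw [h']
  exact pow_ne_zero _ (by norm_num)
end

section
/- Let β be a nonempty permutation that is itself a 2413-balloon (i.e. β = B(γ) for some nonempty permutation γ), and let π = B(β). Then μ(1,π) = 2·μ(1,β). -/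
/-!
The permutation pattern poset and its Möbius function.

A permutation of length `n` is represented as an element of the symmetric
group on `Fin n`; the collection of all permutations of all lengths is the
sigma type `PPerm`.  Pattern containment `PPerm.Le` makes `PPerm` into the
permutation pattern poset, and `mu` is its Möbius function, defined by the
usual recursion `μ(σ,σ) = 1`, `μ(σ,π) = -∑_{σ ≤ λ < π} μ(σ,λ)` for `σ < π`
and `μ(σ,π) = 0` otherwise.
-/

open scoped Classical

/-- `π` is the 2413-balloon `B(β)` of `β`: writing `b = |β|`, the permutation
`π` has length `b + 4` and (1-indexed) entry sequence
`2, b+4, β(1)+2, …, β(b)+2, 1, b+3`.  In the 0-indexed representation used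
here: position `0` has value `1`, position `1` has value `b+3`, position
`t+2` has value `β(t)+2` for `t < b`, position `b+2` has value `0`, and
position `b+3` has value `b+2`. -/
def IsBalloon2413 (β π : PPerm) : Prop :=
  π.1 = β.1 + 4 ∧
    ∀ p : Fin π.1,
      ((p : ℕ) = 0 → (π.2 p : ℕ) = 1) ∧
      ((p : ℕ) = 1 → (π.2 p : ℕ) = β.1 + 3) ∧
      (∀ t : Fin β.1, (p : ℕ) = (t : ℕ) + 2 → (π.2 p : ℕ) = (β.2 t : ℕ) + 2) ∧
      ((p : ℕ) = β.1 + 2 → (π.2 p : ℕ) = 0) ∧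
      ((p : ℕ) = β.1 + 3 → (π.2 p : ℕ) = β.1 + 2)

set_option linter.unreachableTactic false
set_option linter.unusedTactic false
set_option linter.unusedSimpArgs false
namespace DB
open Equiv

/-- Insert a point at position `i` with value `j`. -/
def ins {n : ℕ} (i j : Fin (n+1)) (σ : Perm (Fin n)) : Perm (Fin (n+1)) :=
  (finSuccEquiv' i).trans ((Equiv.optionCongr σ).trans (finSuccEquiv' j).symm)

theorem ins_self {n : ℕ} (i j : Fin (n+1)) (σ : Perm (Fin n)) : ins i j σ i = j := by
  simp [ins]

theorem ins_succAbove {n : ℕ} (i j : Fin (n+1)) (σ : Perm (Fin n)) (k : Fin n) :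
    ins i j σ (i.succAbove k) = j.succAbove (σ k) := by
  simp [ins]

theorem exists_ins {n : ℕ} (p : Perm (Fin (n+1))) (k : Fin (n+1)) :
    ∃ q, p = ins k (p k) q := by
  have h : ∀ t, ∃ s, (p k).succAbove s = p (k.succAbove t) := fun t =>
    Fin.exists_succAbove_eq (fun e => Fin.succAbove_ne k t (p.injective e))
  choose g hg using h
  have inj : Function.Injective g := by
    intro a b hab
    have := hg a
    rw [hab, hg b] at this
    exact (Fin.succAbove_right_injective (p.injective this)).symm
  refine ⟨Equiv.ofBijective g (Finite.injective_iff_bijective.1 inj), ?_⟩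
  ext x : 1
  rcases Fin.eq_self_or_eq_succAbove k x with rfl | ⟨t, rfl⟩
  · rw [ins_self]
  · rw [ins_succAbove]; simp [hg]

theorem ins_inj {n : ℕ} {i j : Fin (n+1)} {σ τ : Perm (Fin n)} (h : ins i j σ = ins i j τ) :
    σ = τ := by
  ext x : 1
  have := congrArg (fun p => p (i.succAbove x)) h
  simp only [ins_succAbove] at this
  exact Fin.succAbove_right_injective this

/-- Explicit embeddings. -/
def Emb {m n : ℕ} (p : Perm (Fin m)) (q : Perm (Fin n)) (f : Fin m → Fin n) : Prop :=
  StrictMono f ∧ ∀ a b, p a < p b ↔ q (f a) < q (f b)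

theorem le_refl (s : PPerm) : PPerm.Le s s := ⟨id, strictMono_id, fun _ _ => Iff.rfl⟩

theorem le_trans {s t u : PPerm} (h : PPerm.Le s t) (h' : PPerm.Le t u) : PPerm.Le s u := by
  obtain ⟨f, hf, hf'⟩ := h
  obtain ⟨g, hg, hg'⟩ := h'
  exact ⟨g ∘ f, hg.comp hf, fun a b => (hf' a b).trans (hg' _ _)⟩

theorem le_len {s t : PPerm} (h : PPerm.Le s t) : s.1 ≤ t.1 := by
  obtain ⟨f, hf, _⟩ := h
  simpa using Fintype.card_le_of_injective f hf.injective

theorem perm_eq_of_lt {n : ℕ} {p q : Perm (Fin n)} (h : ∀ a b, p a < p b ↔ q a < q b) :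
    p = q := by
  have hm : StrictMono (p.symm.trans q) := by
    intro a b hab
    have := (h (p.symm a) (p.symm b)).1 (by simpa using hab)
    simpa using this
  have := Subsingleton.elim (hm.orderIsoOfSurjective _ (p.symm.trans q).surjective)
    (OrderIso.refl (Fin n))
  ext x : 1
  have h2 := DFunLike.congr_fun this (p x)
  simpa using h2.symm

theorem strictMono_self {n : ℕ} (f : Fin n → Fin n) (hf : StrictMono f) : f = id := by
  have hs := Finite.injective_iff_surjective.1 hf.injective
  have := Subsingleton.elim (hf.orderIsoOfSurjective _ hs) (OrderIso.refl (Fin n))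
  funext x
  exact DFunLike.congr_fun this x

theorem eq_of_le_len {s t : PPerm} (h : PPerm.Le s t) (hl : s.1 = t.1) : s = t := by
  obtain ⟨n, p⟩ := s
  obtain ⟨m, q⟩ := t
  obtain rfl : n = m := hl
  obtain ⟨f, hf, h⟩ := h
  obtain rfl := strictMono_self f hf
  have : p = q := perm_eq_of_lt h
  rw [this]

theorem emb_ins {n : ℕ} (i j : Fin (n+1)) (σ : Perm (Fin n)) : Emb σ (ins i j σ) i.succAbove := by
  refine ⟨Fin.strictMono_succAbove i, fun a b => ?_⟩
  rw [ins_succAbove, ins_succAbove, (Fin.strictMono_succAbove j).lt_iff_lt]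

theorem ins_miss {m n : ℕ} {i j : Fin (n+1)} {p : Perm (Fin m)} {q : Perm (Fin n)}
    {f : Fin m → Fin (n+1)} (hf : Emb p (ins i j q) f) (hm : ∀ k, f k ≠ i) :
    ∃ f', Emb p q f' ∧ ∀ t, f t = i.succAbove (f' t) := by
  have h : ∀ t, ∃ s, i.succAbove s = f t := fun t => Fin.exists_succAbove_eq (hm t)
  choose g hg using h
  refine ⟨g, ⟨fun a b hab => ?_, fun a b => ?_⟩, fun t => (hg t).symm⟩
  · rw [← (Fin.strictMono_succAbove i).lt_iff_lt, hg, hg]; exact hf.1 hab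
  · rw [hf.2, ← hg, ← hg, ins_succAbove, ins_succAbove, (Fin.strictMono_succAbove j).lt_iff_lt]

theorem ins_hit {m n : ℕ} {i j : Fin (n+1)} {p : Perm (Fin (m+1))} {q : Perm (Fin n)}
    {f : Fin (m+1) → Fin (n+1)} (hf : Emb p (ins i j q) f) {k : Fin (m+1)} (hk : f k = i) :
    ∃ p' f', p = ins k (p k) p' ∧ Emb p' q f' ∧ ∀ t, f (k.succAbove t) = i.succAbove (f' t) := by
  obtain ⟨p', hp'⟩ := exists_ins p k
  have e1 : Emb p' (ins i j q) (f ∘ k.succAbove) := by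
    have := emb_ins k (p k) p'
    rw [← hp'] at this
    exact ⟨hf.1.comp this.1, fun a b => (this.2 a b).trans (hf.2 _ _)⟩
  obtain ⟨f', h1, h2⟩ := ins_miss e1 (fun t ht => by
    have : k.succAbove t = k := hf.1.injective (by rw [hk]; exact ht)
    exact Fin.succAbove_ne _ _ this)
  exact ⟨p', f', hp', h1, h2⟩

theorem hit_transfer {m n : ℕ} {q : Fin (n+1)} {i' : Fin (n+2)}
    {f : Fin (m+1) → Fin (n+2)} {f' : Fin m → Fin (n+1)}
    {k : Fin (m+1)} (hk : f k = i')
    (hf' : ∀ t, f (k.succAbove t) = i'.succAbove (f' t)) (h : ∃ l, f l = i'.succAbove q) :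
    ∃ t, f' t = q := by
  obtain ⟨l, hl⟩ := h
  rcases Fin.eq_self_or_eq_succAbove k l with rfl | ⟨t, rfl⟩
  · rw [hk] at hl; exact absurd hl.symm (Fin.succAbove_ne _ _)
  · refine ⟨t, ?_⟩
    rw [hf'] at hl
    exact Fin.succAbove_right_injective hl

/-- Extreme coordinate. -/
def cor {n : ℕ} (s : Bool) : Fin (n+1) := if s then Fin.last n else 0

def op (s t : Bool) (μ : PPerm) : PPerm := ⟨μ.1 + 1, ins (cor s) (cor t) μ.2⟩

theorem cor_pos {m n : ℕ} {s : Bool} {f : Fin (m+1) → Fin (n+1)} (hf : StrictMono f)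
    {k : Fin (m+1)} (hk : f k = cor s) : k = cor s := by
  cases s
  · have := hf.monotone (Fin.zero_le k)
    rw [hk] at this
    simp only [cor] at this ⊢
    have h : f 0 = f k := by rw [hk]; simpa [cor] using this
    exact (hf.injective h).symm
  · have := hf.monotone (Fin.le_last k)
    rw [hk] at this
    simp only [cor] at this ⊢
    have h : f (Fin.last _) = f k := by rw [hk]; simpa [cor] using this
    exact (hf.injective h).symm

theorem cor_val {m n : ℕ} {t : Bool} {p : Perm (Fin (m+1))} {q : Perm (Fin (n+1))}
    {f : Fin (m+1) → Fin (n+1)} (hf : Emb p q f) {k : Fin (m+1)} (hk : q (f k) = cor t) :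
    p k = cor t := by
  cases t
  · have h := (hf.2 (p.symm 0) k).not
    rw [hk] at h
    have h2 : ¬ (p (p.symm 0) < p k) := h.2 (by simp [cor])
    simpa [cor] using h2
  · have h := (hf.2 k (p.symm (Fin.last _))).not
    rw [hk] at h
    have h2 : ¬ (p k < p (p.symm (Fin.last _))) := h.2 (by simp [cor, Fin.le_last])
    simpa [cor, Fin.last_le_iff] using h2

theorem op_inj {s t : Bool} {a b : PPerm} (h : op s t a = op s t b) : a = b := by
  obtain ⟨n, p⟩ := a
  obtain ⟨m, q⟩ := b
  have h1 : n + 1 = m + 1 := congrArg Sigma.fst h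
  obtain rfl : n = m := by omega
  have h2 : ins (cor s) (cor t) p = ins (cor s) (cor t) q := by
    simpa [op] using h
  rw [ins_inj h2]

theorem le_op_self (s t : Bool) (a : PPerm) : PPerm.Le a (op s t a) :=
  ⟨_, emb_ins _ _ _⟩

theorem le_op {s t : Bool} {l a : PPerm} (h : PPerm.Le l (op s t a)) :
    PPerm.Le l a ∨ ∃ l', l = op s t l' ∧ PPerm.Le l' a := by
  obtain ⟨m, p⟩ := l
  obtain ⟨f, hf⟩ := h
  have hf : Emb p (ins (cor s) (cor t) a.2) f := hf
  by_cases hm : ∀ k, f k ≠ cor s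
  · obtain ⟨f', h, _⟩ := ins_miss hf hm
    exact Or.inl ⟨f', h⟩
  · push Not at hm
    obtain ⟨k, hk⟩ := hm
    cases m with
    | zero => exact k.elim0
    | succ m =>
      obtain ⟨p', f', h1, h2, _⟩ := ins_hit hf hk
      have hv : p k = cor t := cor_val hf (by rw [hk, ins_self])
      rw [hv, cor_pos hf.1 hk] at h1
      exact Or.inr ⟨⟨m, p'⟩, by rw [h1]; rfl, f', h2⟩

theorem emb_op {s t : Bool} {n m : ℕ} {p : Perm (Fin n)} {q : Perm (Fin m)} {f : Fin n → Fin m}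
    (h : Emb p q f) : ∃ g, Emb (ins (cor s) (cor t) p) (ins (cor s) (cor t) q) g := by
  obtain ⟨hf, hq⟩ := h
  have hs : ∀ {x y : Fin n}, (f x < f y ↔ x < y) := hf.lt_iff_lt
  have hl : ∀ {n : ℕ} (x : Fin (n+1)), ¬ Fin.last n < x := fun x => (Fin.le_last x).not_gt
  cases s
  · refine ⟨(Fin.cases 0 (fun x => (f x).succ) : Fin (n+1) → Fin (m+1)), ?_, ?_⟩
    · intro x y
      refine Fin.cases ?_ (fun x => ?_) x <;> refine Fin.cases ?_ (fun y => ?_) y <;> simp [hs]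
    · have e : ∀ {n} (p : Perm (Fin n)) k, ins (cor false) (cor t) p (Fin.succ k) =
          (cor t).succAbove (p k) := by
        intro n p k
        rw [← ins_succAbove (cor false)]; simp [cor]
      have e0 : ∀ {n} (p : Perm (Fin n)), ins (cor false) (cor t) p 0 = cor t :=
        fun p => ins_self (cor false) _ p
      intro x y
      refine Fin.cases ?_ (fun x => ?_) x <;> refine Fin.cases ?_ (fun y => ?_) y <;>
        cases t <;> simp [e, e0] <;> simp [cor, hq, Fin.castSucc_lt_last, Fin.le_last, hl]
  · refine ⟨(Fin.lastCases (Fin.last m) (fun x => (f x).castSucc) : Fin (n+1) → Fin (m+1)), ?_, ?_⟩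
    · intro x y
      refine Fin.lastCases ?_ (fun x => ?_) x <;> refine Fin.lastCases ?_ (fun y => ?_) y <;>
        simp [hs, Fin.castSucc_lt_last, Fin.le_last]
    · have e : ∀ {n} (p : Perm (Fin n)) k, ins (cor true) (cor t) p (Fin.castSucc k) =
          (cor t).succAbove (p k) := by
        intro n p k
        rw [← ins_succAbove (cor true)]; simp [cor]
      have e0 : ∀ {n} (p : Perm (Fin n)), ins (cor true) (cor t) p (Fin.last n) = cor t :=
        fun p => ins_self (cor true) _ p
      intro x y
      refine Fin.lastCases ?_ (fun x => ?_) x <;> refine Fin.lastCases ?_ (fun y => ?_) y <;>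
        cases t <;> simp [e, e0] <;> simp [cor, hq, Fin.castSucc_lt_last, Fin.le_last, hl]

theorem op_mono {s t : Bool} {a b : PPerm} (h : PPerm.Le a b) : PPerm.Le (op s t a) (op s t b) := by
  obtain ⟨f, hf⟩ := h
  obtain ⟨g, hg⟩ := emb_op (s := s) (t := t) (p := a.2) (q := b.2) (f := f) hf
  exact ⟨g, hg⟩

theorem op_le_op {s t : Bool} {a b : PPerm} : PPerm.Le (op s t a) (op s t b) ↔ PPerm.Le a b := by
  refine ⟨fun h => ?_, op_mono⟩
  rcases le_op h with h | ⟨l, h1, h2⟩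
  · exact le_trans (le_op_self _ _ _) h
  · rw [op_inj h1]; exact h2

def Cor (s t : Bool) (a : PPerm) : Prop := ∃ b, a = op s t b

theorem le_op_of_not {s t : Bool} {l a : PPerm} (h : ¬ Cor s t l) :
    PPerm.Le l (op s t a) ↔ PPerm.Le l a := by
  refine ⟨fun h' => ?_, fun h' => le_trans h' (le_op_self _ _ _)⟩
  rcases le_op h' with h' | ⟨l', h1, h2⟩
  · exact h'
  · exact absurd ⟨l', h1⟩ h

theorem cor_iff {s t : Bool} {n : ℕ} {p : Perm (Fin (n+1))} :
    Cor s t ⟨n+1, p⟩ ↔ p (cor s) = cor t := by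
  constructor
  · rintro ⟨⟨m, q⟩, h⟩
    have h1 : n + 1 = m + 1 := congrArg Sigma.fst h
    obtain rfl : n = m := by omega
    have h2 : p = ins (cor s) (cor t) q := by simpa [op] using h
    rw [h2, ins_self]
  · intro h
    obtain ⟨q, hq⟩ := exists_ins p (cor s)
    rw [h] at hq
    exact ⟨⟨n, q⟩, by rw [hq]; rfl⟩

theorem cor_ne {n : ℕ} {s t : Bool} (h : s ≠ t) : (cor s : Fin (n+2)) ≠ cor t := by
  cases s <;> cases t <;> simp [cor, Fin.ext_iff] at h ⊢

theorem not_cor1 {s t t' : Bool} {l : PPerm} (hl : 2 ≤ l.1) (h : Cor s t l) (ht : t ≠ t') :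
    ¬ Cor s t' l := by
  obtain ⟨n, p⟩ := l
  obtain ⟨n, rfl⟩ : ∃ k, n = k + 2 := ⟨n - 2, by simp at hl; omega⟩
  rw [cor_iff] at h ⊢
  rw [h]; exact cor_ne ht

theorem not_cor2 {s s' t : Bool} {l : PPerm} (hl : 2 ≤ l.1) (h : Cor s t l) (ht : s ≠ s') :
    ¬ Cor s' t l := by
  obtain ⟨n, p⟩ := l
  obtain ⟨n, rfl⟩ : ∃ k, n = k + 2 := ⟨n - 2, by simp at hl; omega⟩
  rw [cor_iff] at h ⊢
  rw [← h]; exact fun e => cor_ne ht (p.injective e).symm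

theorem cor_succAbove {n : ℕ} (s t : Bool) (h : t = !s) :
    (cor s : Fin (n+2)).succAbove (cor t : Fin (n+1)) = cor t := by
  subst h
  cases s <;> simp [cor]

theorem cor_opp {s t s' t' : Bool} {u : PPerm} (hs : s' = !s) (ht : t' = !t)
    (hu : 1 ≤ u.1) (h : Cor s' t' (op s t u)) : Cor s' t' u := by
  obtain ⟨n, p⟩ := u
  obtain ⟨n, rfl⟩ : ∃ k, n = k + 1 := ⟨n - 1, by simp at hu; omega⟩
  simp only [op] at h
  rw [cor_iff] at h ⊢
  rw [← cor_succAbove s s' hs, ins_succAbove, ← cor_succAbove t t' ht] at h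
  exact Fin.succAbove_right_injective h

theorem op_comm {s t s' t' : Bool} (hs : s' = !s) (ht : t' = !t) (w : PPerm) :
    op s t (op s' t' w) = op s' t' (op s t w) := by
  have key : Cor s' t' (op s t (op s' t' w)) := by
    simp only [op]
    rw [cor_iff, ← cor_succAbove s s' hs, ins_succAbove, ins_self, cor_succAbove t t' ht]
  obtain ⟨u, hu⟩ := key
  have hul : u.1 = w.1 + 1 := by
    have := congrArg Sigma.fst hu
    simp [op] at this; omega
  have h2 : Cor s t u := by
    refine cor_opp (s := s') (t := t') (by simp [hs]) (by simp [ht]) (by omega) ?_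
    exact ⟨_, hu.symm⟩
  obtain ⟨v, rfl⟩ := h2
  rw [hu]
  have hlen : v.1 = w.1 := by simpa [op] using hul
  suffices v = w by rw [this]
  -- both are the middle part
  obtain ⟨n, v⟩ := v
  obtain ⟨m, w⟩ := w
  obtain rfl : n = m := hlen
  have h3 : ins (cor s) (cor t) (ins (cor s') (cor t') w) =
      ins (cor s') (cor t') (ins (cor s) (cor t) v) := by simpa [op] using hu
  have hmid : ∀ x : Fin n, (cor s : Fin (n+2)).succAbove ((cor s' : Fin (n+1)).succAbove x) =
      (cor s' : Fin (n+2)).succAbove ((cor s : Fin (n+1)).succAbove x) := by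
    intro x; subst hs; cases s <;> simp [cor]
  have hmid' : ∀ x : Fin n, (cor t : Fin (n+2)).succAbove ((cor t' : Fin (n+1)).succAbove x) =
      (cor t' : Fin (n+2)).succAbove ((cor t : Fin (n+1)).succAbove x) := by
    intro x; subst ht; cases t <;> simp [cor]
  have : v = w := by
    ext x : 1
    have h4 := congrArg (fun p => p ((cor s).succAbove ((cor s').succAbove x))) h3
    simp only [ins_succAbove] at h4
    rw [hmid, ins_succAbove, ins_succAbove, hmid'] at h4
    exact (Fin.succAbove_right_injective (Fin.succAbove_right_injective h4)).symm
  rw [this]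

/-- values as natural numbers -/
def V {n : ℕ} (σ : Perm (Fin n)) (x : ℕ) : ℕ := if h : x < n then (σ ⟨x, h⟩ : ℕ) else 0

theorem V_ext {n : ℕ} {σ τ : Perm (Fin n)} (h : ∀ x, x < n → V σ x = V τ x) : σ = τ := by
  ext x
  have := h x x.2
  simpa [V] using this

theorem V_lt {n : ℕ} (σ : Perm (Fin n)) {x : ℕ} (h : x < n) : V σ x < n := by
  simp [V, h]

theorem V_ins {n : ℕ} (i j : Fin (n+1)) (σ : Perm (Fin n)) {x : ℕ} (hx : x < n + 1) :
    V (ins i j σ) x = if x = (i : ℕ) then (j : ℕ) else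
      if V σ (if x < (i : ℕ) then x else x - 1) < (j : ℕ) then
        V σ (if x < (i : ℕ) then x else x - 1) else
        V σ (if x < (i : ℕ) then x else x - 1) + 1 := by
  obtain ⟨X, rfl⟩ : ∃ X : Fin (n+1), x = X := ⟨⟨x, hx⟩, rfl⟩
  have e : ∀ Y : Fin (n+1), V (ins i j σ) Y = (ins i j σ Y : ℕ) := fun Y => by simp only [V, Y.2, dite_true]
  rw [e]
  rcases Fin.eq_self_or_eq_succAbove i X with rfl | ⟨t, rfl⟩
  · rw [ins_self]; simp
  · rw [ins_succAbove]
    have hne : ((i.succAbove t : Fin (n+1)) : ℕ) ≠ i := fun h =>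
      Fin.succAbove_ne i t (Fin.ext h)
    rw [if_neg hne]
    have ht : (if ((i.succAbove t : Fin (n+1)) : ℕ) < i then ((i.succAbove t : Fin (n+1)) : ℕ)
        else ((i.succAbove t : Fin (n+1)) : ℕ) - 1) = t := by
      simp only [Fin.succAbove, Fin.lt_def]
      split_ifs <;> simp_all <;> omega
    rw [ht]
    have e2 : V σ t = σ t := by simp [V]
    rw [e2]
    simp only [Fin.succAbove, Fin.lt_def]
    split_ifs <;> simp_all

/-- Corner insertion on the level of permutations. -/
def pop (s t : Bool) {n : ℕ} (p : Perm (Fin n)) : Perm (Fin (n+1)) := ins (cor s) (cor t) p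

local notation "oA" => op false false
local notation "oC" => op true false
local notation "oE" => op true true
local notation "oD" => op false true
local notation "pA" => pop false false
local notation "pC" => pop true false
local notation "pE" => pop true true
local notation "pD" => pop false true

/-- The balloon. -/
def Bal (β : PPerm) : PPerm := ⟨β.1 + 4, ins 1 (Fin.last _) (pE (pC (pA β.2)))⟩

def Table (b : ℕ) (v w : ℕ → ℕ) : Prop :=
  w 0 = 1 ∧ w 1 = b + 3 ∧ (∀ t, t < b → w (t+2) = v t + 2) ∧ w (b+2) = 0 ∧ w (b+3) = b + 2

theorem table_unique {b : ℕ} {v w w' : ℕ → ℕ} (h : Table b v w) (h' : Table b v w') :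
    ∀ x, x < b + 4 → w x = w' x := by
  intro x hx
  obtain ⟨h0, h1, h2, h3, h4⟩ := h
  obtain ⟨k0, k1, k2, k3, k4⟩ := h'
  rcases x with _ | _ | x
  · rw [h0, k0]
  · rw [h1, k1]
  · rcases lt_trichotomy x b with h | h | h
    · rw [h2 x h, k2 x h]
    · subst h; rw [h3, k3]
    · obtain rfl : x = b + 1 := by omega
      rw [h4, k4]

theorem cor_false_val {n : ℕ} : ((cor false : Fin (n+1)) : ℕ) = 0 := rfl
theorem cor_true_val {n : ℕ} : ((cor true : Fin (n+1)) : ℕ) = n := rfl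

theorem V_op_ff {b : ℕ} (p : Perm (Fin b)) {x : ℕ} (hx : x < b + 1) :
    V (pA p) x = if x = 0 then 0 else V p (x - 1) + 1 := by
  rw [pop, V_ins _ _ _ hx]
  simp [cor]

theorem V_op_tf {b : ℕ} (p : Perm (Fin b)) {x : ℕ} (hx : x < b + 1) :
    V (pC p) x = if x = b then 0 else V p x + 1 := by
  rw [pop, V_ins _ _ _ hx]
  simp only [cor_true_val, cor_false_val]
  by_cases h : x = b
  · simp [h]
  · have h1 : x < b := by omega
    simp [h, h1]

theorem V_op_tt {b : ℕ} (p : Perm (Fin b)) {x : ℕ} (hx : x < b + 1) :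
    V (pE p) x = if x = b then b else V p x := by
  rw [pop, V_ins _ _ _ hx]
  simp only [cor_true_val]
  by_cases h : x = b
  · simp [h]
  · have h1 : x < b := by omega
    simp [h, h1, V_lt p h1]

theorem V_op_ft {b : ℕ} (p : Perm (Fin b)) {x : ℕ} (hx : x < b + 1) :
    V (pD p) x = if x = 0 then b else V p (x - 1) := by
  rw [pop, V_ins _ _ _ hx]
  simp only [cor_true_val, cor_false_val]
  by_cases h : x = 0
  · simp [h]
  · have h1 : x - 1 < b := by omega
    simp [h, V_lt p h1]

theorem table_d {b : ℕ} (p : Perm (Fin b)) : Table b (V p) (V (ins 1 (Fin.last _) (pE (pC (pA p))))) := by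
  have hv : ∀ t, t < b → V p t < b := fun t => V_lt p
  refine ⟨?_, ?_, fun t ht => ?_, ?_, ?_⟩ <;>
  · rw [V_ins _ _ _ (by omega)]
    try have := hv t ht
    try have e0 : t + 2 - 1 = t + 1 := by omega
    try have e1 : t ≠ b := by omega
    try have e2 : t ≠ b + 1 := by omega
    try have e3 : t < b + 1 := by omega
    try have e4 : t ≤ b := by omega
    try have e5 : V p t ≤ b := by omega
    have e : b + 2 - 1 = b + 1 := by omega
    have e' : b + 3 - 1 = b + 2 := by omega
    simp (disch := omega) [*, V_op_tt, V_op_ff, V_op_tf, V_op_ft]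
    try first | omega | (split_ifs <;> omega)

theorem table_a {b : ℕ} (p : Perm (Fin b)) : Table b (V p) (V (ins 0 1 (pD (pE (pC p))))) := by
  have hv : ∀ t, t < b → V p t < b := fun t => V_lt p
  refine ⟨?_, ?_, fun t ht => ?_, ?_, ?_⟩ <;>
  · rw [V_ins _ _ _ (by omega)]
    try have := hv t ht
    try have e0 : t + 2 - 1 = t + 1 := by omega
    try have e1 : t ≠ b := by omega
    try have e2 : t ≠ b + 1 := by omega
    try have e3 : t < b + 1 := by omega
    try have e4 : t ≤ b := by omega
    try have e5 : V p t ≤ b := by omega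
    have e : b + 2 - 1 = b + 1 := by omega
    have e' : b + 3 - 1 = b + 2 := by omega
    simp (disch := omega) [*, V_op_tt, V_op_ff, V_op_tf, V_op_ft]
    try first | omega | (split_ifs <;> omega)

theorem table_c {b : ℕ} (p : Perm (Fin b)) : Table b (V p) (V (ins (Fin.last _).castSucc 0 (pA (pD (pE p))))) := by
  have hv : ∀ t, t < b → V p t < b := fun t => V_lt p
  refine ⟨?_, ?_, fun t ht => ?_, ?_, ?_⟩ <;>
  · rw [V_ins _ _ _ (by omega)]
    try have := hv t ht
    try have e0 : t + 2 - 1 = t + 1 := by omega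
    try have e1 : t ≠ b := by omega
    try have e2 : t ≠ b + 1 := by omega
    try have e3 : t < b + 1 := by omega
    try have e4 : t ≤ b := by omega
    try have e5 : V p t ≤ b := by omega
    have e : b + 2 - 1 = b + 1 := by omega
    have e' : b + 3 - 1 = b + 2 := by omega
    simp (disch := omega) [*, V_op_tt, V_op_ff, V_op_tf, V_op_ft]
    try first | omega | (split_ifs <;> omega)

theorem table_e {b : ℕ} (p : Perm (Fin b)) : Table b (V p) (V (ins (Fin.last _) (Fin.last _).castSucc (pC (pA (pD p))))) := by
  have hv : ∀ t, t < b → V p t < b := fun t => V_lt p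
  refine ⟨?_, ?_, fun t ht => ?_, ?_, ?_⟩ <;>
  · rw [V_ins _ _ _ (by omega)]
    try have := hv t ht
    try have e0 : t + 2 - 1 = t + 1 := by omega
    try have e1 : t ≠ b := by omega
    try have e2 : t ≠ b + 1 := by omega
    try have e3 : t < b + 1 := by omega
    try have e4 : t ≤ b := by omega
    try have e5 : V p t ≤ b := by omega
    have e : b + 2 - 1 = b + 1 := by omega
    have e' : b + 3 - 1 = b + 2 := by omega
    simp (disch := omega) [*, V_op_tt, V_op_ff, V_op_tf, V_op_ft]
    try first | omega | (split_ifs <;> omega)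

theorem bal_a (β : PPerm) : Bal β = ⟨β.1 + 4, ins 0 1 (pD (pE (pC β.2)))⟩ :=
  congrArg (Sigma.mk (β.1 + 4)) (V_ext (table_unique (table_d β.2) (table_a β.2)))

theorem bal_c (β : PPerm) : Bal β = ⟨β.1 + 4, ins (Fin.last _).castSucc 0 (pA (pD (pE β.2)))⟩ :=
  congrArg (Sigma.mk (β.1 + 4)) (V_ext (table_unique (table_d β.2) (table_c β.2)))

theorem bal_e (β : PPerm) : Bal β = ⟨β.1 + 4, ins (Fin.last _) (Fin.last _).castSucc (pC (pA (pD β.2)))⟩ :=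
  congrArg (Sigma.mk (β.1 + 4)) (V_ext (table_unique (table_d β.2) (table_e β.2)))

theorem bal_of_is {β π : PPerm} (h : IsBalloon2413 β π) : π = Bal β := by
  obtain ⟨n, p⟩ := π
  obtain ⟨h1, h2⟩ := h
  obtain rfl : n = β.1 + 4 := h1
  have ht : Table β.1 (V β.2) (V p) := by
    refine ⟨?_, ?_, fun t ht => ?_, ?_, ?_⟩
    · simpa [V] using (h2 ⟨0, by simp⟩).1 rfl
    · simpa [V] using (h2 ⟨1, by simp⟩).2.1 rfl
    · have := (h2 ⟨t + 2, by simp; omega⟩).2.2.1 ⟨t, ht⟩ rfl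
      have e : t + 2 < β.1 + 4 := by omega
      simpa [V, ht, e] using this
    · simpa [V] using (h2 ⟨β.1 + 2, by simp⟩).2.2.2.1 rfl
    · simpa [V] using (h2 ⟨β.1 + 3, by simp⟩).2.2.2.2 rfl
  exact congrArg (Sigma.mk (β.1 + 4)) (V_ext (table_unique ht (table_d β.2)))

theorem bal_inj {a b : PPerm} (h : Bal a = Bal b) : a = b := by
  obtain ⟨n, p⟩ := a
  obtain ⟨m, q⟩ := b
  have h1 : n + 4 = m + 4 := congrArg Sigma.fst h
  obtain rfl : n = m := by omega
  have h2 : ins 1 (Fin.last _) (pE (pC (pA p))) = ins 1 (Fin.last _) (pE (pC (pA q))) := by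
    simpa [Bal] using h
  rw [ins_inj (ins_inj (ins_inj (ins_inj h2)))]

theorem triple_le_bal (β : PPerm) : PPerm.Le (oE (oC (oA β))) (Bal β) ∧
    PPerm.Le (oD (oE (oC β))) (Bal β) ∧ PPerm.Le (oA (oD (oE β))) (Bal β) ∧
    PPerm.Le (oC (oA (oD β))) (Bal β) := by
  refine ⟨⟨_, emb_ins _ _ _⟩, ?_, ?_, ?_⟩
  · rw [bal_a]; exact ⟨_, emb_ins _ _ _⟩
  · rw [bal_c]; exact ⟨_, emb_ins _ _ _⟩
  · rw [bal_e]; exact ⟨_, emb_ins _ _ _⟩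

theorem le_bal_self (β : PPerm) : PPerm.Le β (Bal β) :=
  le_trans (le_op_self _ _ _) (le_trans (le_op_self _ _ _) (le_trans (le_op_self _ _ _)
    (triple_le_bal β).1))

theorem pop_hit {s t : Bool} {m n : ℕ} {p : Perm (Fin m)} {q : Perm (Fin n)}
    {f : Fin m → Fin (n+1)} (hf : Emb p (pop s t q) f) (h : ∃ k, f k = cor s) :
    ∃ m', ∃ e : m = m' + 1, ∃ p' : Perm (Fin m'), ∃ f' : Fin m' → Fin n,
      (⟨m, p⟩ : PPerm) = ⟨m' + 1, pop s t p'⟩ ∧ Emb p' q f' ∧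
      ∀ x, (∃ k, f k = (cor s).succAbove x) → ∃ k, f' k = x := by
  obtain ⟨k, hk⟩ := h
  cases m with
  | zero => exact k.elim0
  | succ m =>
    obtain ⟨p', f', h1, h2, h3⟩ := ins_hit hf hk
    have hv : p k = cor t := cor_val hf (by rw [hk, pop, ins_self])
    have hkk := cor_pos hf.1 hk
    refine ⟨m, rfl, p', f', ?_, h2, fun x hx => ?_⟩
    · rw [hv, hkk] at h1
      rw [h1]; rfl
    · obtain ⟨l, hl⟩ := hx
      rcases Fin.eq_self_or_eq_succAbove k l with rfl | ⟨y, rfl⟩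
      · rw [hk] at hl; exact absurd hl.symm (Fin.succAbove_ne _ _)
      · refine ⟨y, ?_⟩
        rw [h3] at hl
        exact Fin.succAbove_right_injective hl

theorem le_bal {l β : PPerm} (h : PPerm.Le l (Bal β)) :
    (PPerm.Le l (oE (oC (oA β))) ∨ PPerm.Le l (oD (oE (oC β))) ∨ PPerm.Le l (oA (oD (oE β))) ∨
    PPerm.Le l (oC (oA (oD β)))) ∨ ∃ β', l = Bal β' ∧ PPerm.Le β' β := by
  obtain ⟨b, q⟩ := β
  obtain ⟨m, p⟩ := l
  obtain ⟨f, hf⟩ := h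
  change Fin m → Fin (b + 4) at f
  have hd : Emb p (ins 1 (Fin.last _) (pE (pC (pA q)))) f := hf
  have eqs : ∀ {r r' : Perm (Fin (b+4))}, (⟨b+4, r⟩ : PPerm) = ⟨b+4, r'⟩ → r = r' := by
    intro r r' h
    simpa using h
  have ha : Emb p (ins 0 1 (pD (pE (pC q)))) f := by
    rw [← eqs (bal_a ⟨b, q⟩)]; exact hd
  have hc : Emb p (ins (Fin.last _).castSucc 0 (pA (pD (pE q)))) f := by
    rw [← eqs (bal_c ⟨b, q⟩)]; exact hd
  have he : Emb p (ins (Fin.last _) (Fin.last _).castSucc (pC (pA (pD q)))) f := by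
    rw [← eqs (bal_e ⟨b, q⟩)]; exact hd
  by_cases md : ∀ k, f k ≠ 1
  · obtain ⟨f', h, _⟩ := ins_miss hd md
    exact Or.inl (Or.inl ⟨f', h⟩)
  by_cases ma : ∀ k, f k ≠ 0
  · obtain ⟨f', h, _⟩ := ins_miss ha ma
    exact Or.inl (Or.inr (Or.inl ⟨f', h⟩))
  by_cases mc : ∀ k, f k ≠ (Fin.last _).castSucc
  · obtain ⟨f', h, _⟩ := ins_miss hc mc
    exact Or.inl (Or.inr (Or.inr (Or.inl ⟨f', h⟩)))
  by_cases me : ∀ k, f k ≠ Fin.last _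
  · obtain ⟨f', h, _⟩ := ins_miss he me
    exact Or.inl (Or.inr (Or.inr (Or.inr ⟨f', h⟩)))
  push Not at md ma mc me
  right
  obtain ⟨k, hk⟩ := md
  cases m with
  | zero => exact k.elim0
  | succ m =>
    obtain ⟨p1, f1, h1, h2, h3⟩ := ins_hit hd hk
    have tr : ∀ x, (∃ l, f l = (1 : Fin (b+4)).succAbove x) → ∃ l, f1 l = x :=
      fun x hx => hit_transfer hk h3 hx
    have hv : p k = Fin.last _ := cor_val (t := true) hd (by rw [hk, ins_self]; rfl)
    have k1 : (k : ℕ) = 1 := by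
      obtain ⟨k0, hk0⟩ := ma
      have z : k0 = 0 := cor_pos (s := false) hd.1 hk0
      subst z
      have hkv : (f k : ℕ) = 1 := by rw [hk]; rfl
      rcases k with ⟨k, hkl⟩
      rcases k with _ | _ | k
      · exfalso
        have : f 0 = 1 := hk
        rw [hk0] at this
        exact absurd (congrArg Fin.val this) (by decide : (0 : ℕ) ≠ 1)
      · rfl
      · exfalso
        have q1 : f 0 < f ⟨1, by omega⟩ := hd.1 (by simp [Fin.lt_def])
        have q2 : f ⟨1, by omega⟩ < f ⟨k + 1 + 1, hkl⟩ := hd.1 (by simp [Fin.lt_def])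
        rw [Fin.lt_def] at q1 q2
        omega
    have s1 : (1 : Fin (b+4)).succAbove (cor true : Fin (b+3)) = Fin.last _ := by
      simp [cor, Fin.ext_iff, Fin.succAbove, Fin.lt_def]
    have s2 : (1 : Fin (b+4)).succAbove ((cor true : Fin (b+3)).succAbove (cor true : Fin (b+2)))
        = (Fin.last _).castSucc := by
      simp [cor, Fin.ext_iff, Fin.succAbove, Fin.lt_def]
    have s3 : (1 : Fin (b+4)).succAbove ((cor true : Fin (b+3)).succAbove
        ((cor true : Fin (b+2)).succAbove (cor false : Fin (b+1)))) = 0 := by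
      simp [cor, Fin.ext_iff, Fin.succAbove, Fin.lt_def]
    obtain ⟨m2, rfl, p2, f2, g1, g2, g3⟩ := pop_hit h2 (tr _ (by rw [s1]; exact me))
    obtain ⟨m3, rfl, p3, f3, i1, i2, i3⟩ := pop_hit g2 (g3 _ (tr _ (by rw [s2]; exact mc)))
    obtain ⟨m4, rfl, p4, f4, j1, j2, j3⟩ := pop_hit i2 (i3 _ (g3 _ (tr _ (by rw [s3]; exact ma))))
    have hk' : k = 1 := Fin.ext k1
    refine ⟨⟨m4, p4⟩, ?_, f4, j2⟩
    have j1' : p3 = pA p4 := by simpa using j1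
    have i1' : p2 = pC p3 := by simpa using i1
    have g1' : p1 = pE p2 := by simpa using g1
    rw [hv, hk', g1', i1', j1'] at h1
    exact congrArg (Sigma.mk (m4 + 4)) h1

theorem five {n x : ℕ} (h : x < n + 4) :
    x = 0 ∨ x = 1 ∨ (∃ t, t < n ∧ x = t + 2) ∨ x = n + 2 ∨ x = n + 3 := by
  by_cases h0 : x = 0
  · exact Or.inl h0
  by_cases h1 : x = 1
  · exact Or.inr (Or.inl h1)
  by_cases h2 : x < n + 2
  · exact Or.inr (Or.inr (Or.inl ⟨x - 2, by omega, by omega⟩))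
  · omega

theorem bal_mono {a b : PPerm} (h : PPerm.Le a b) : PPerm.Le (Bal a) (Bal b) := by
  obtain ⟨n, p⟩ := a
  obtain ⟨m, q⟩ := b
  obtain ⟨f, hf, hv⟩ := h
  change Fin n → Fin m at f
  obtain ⟨g, hg⟩ : ∃ g : ℕ → ℕ, ∀ t : Fin n, g t = f t :=
    ⟨fun t => if h : t < n then f ⟨t, h⟩ else 0, fun t => by simp⟩
  have g1 : ∀ t, t < n → g t < m := fun t ht => by
    rw [hg ⟨t, ht⟩]; exact (f ⟨t, ht⟩).2
  have g2 : ∀ t, t < n → ∀ s, s < n → (t < s → g t < g s) := fun t ht s hs h => by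
    rw [hg ⟨t, ht⟩, hg ⟨s, hs⟩]; exact hf h
  have g3 : ∀ t, t < n → ∀ s, s < n → (V p t < V p s ↔ V q (g t) < V q (g s)) :=
    fun t ht s hs => by
    have := hv ⟨t, ht⟩ ⟨s, hs⟩
    have e1 : V q (g t) = q (f ⟨t, ht⟩) := by
      rw [hg ⟨t, ht⟩]; simp [V]
    have e2 : V q (g s) = q (f ⟨s, hs⟩) := by
      rw [hg ⟨s, hs⟩]; simp [V]
    have e3 : V p t = p ⟨t, ht⟩ := by simp [V, ht]
    have e4 : V p s = p ⟨s, hs⟩ := by simp [V, hs]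
    rw [e1, e2, e3, e4]; exact this
  have pv : ∀ t, t < n → V p t < n := fun t => V_lt p
  have qv : ∀ t, t < n → V q (g t) < m := fun t ht => V_lt q (g1 t ht)
  obtain ⟨G, G0, G1, G2, G3, G4⟩ : ∃ G : ℕ → ℕ, G 0 = 0 ∧ G 1 = 1 ∧
      (∀ t, t < n → G (t+2) = g t + 2) ∧ G (n+2) = m + 2 ∧ G (n+3) = m + 3 := by
    refine ⟨fun x => if x < 2 then x else if x < n + 2 then g (x-2) + 2 else x - n + m,
      ?_, ?_, fun t ht => ?_, ?_, ?_⟩ <;> simp <;> omega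
  have Gl : ∀ x, x < n + 4 → G x < m + 4 := by
    intro x hx
    rcases five hx with rfl | rfl | ⟨t, ht, rfl⟩ | rfl | rfl
    · omega
    · omega
    · have := g1 t ht
      rw [G2 t ht]; omega
    · omega
    · omega
  obtain ⟨P0, P1, P2, P3, P4⟩ := table_d p
  obtain ⟨Q0, Q1, Q2, Q3, Q4⟩ := table_d q
  have ev : ∀ {k : ℕ} (r : Perm (Fin k)) (x : Fin k), (r x : ℕ) = V r x := by
    intro k r x; simp [V]
  refine ⟨fun x => ⟨G x, Gl x x.2⟩, fun x y hxy => ?_, fun x y => ?_⟩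
  · rw [Fin.lt_def] at hxy ⊢
    show G x < G y
    obtain ⟨x, hx⟩ := x
    obtain ⟨y, hy⟩ := y
    simp only at hxy ⊢
    change x < n + 4 at hx
    change y < n + 4 at hy
    rcases five hx with rfl | rfl | ⟨t, ht, rfl⟩ | rfl | rfl <;>
    rcases five hy with rfl | rfl | ⟨s, hs, rfl⟩ | rfl | rfl <;>
    (try have k1 := g1 t ht) <;> (try have k2 := g1 s hs) <;>
    (try have k3 := g2 t ht s hs (by omega)) <;>
    (try rw [G2 t ht]) <;> (try rw [G2 s hs]) <;> omega
  · rw [Fin.lt_def, Fin.lt_def, ev, ev, ev, ev]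
    show V (ins 1 (Fin.last _) (pE (pC (pA p)))) x < V (ins 1 (Fin.last _) (pE (pC (pA p)))) y ↔ 
      V (ins 1 (Fin.last _) (pE (pC (pA q)))) (G x) < V (ins 1 (Fin.last _) (pE (pC (pA q)))) (G y)
    obtain ⟨x, hx⟩ := x
    obtain ⟨y, hy⟩ := y
    change x < n + 4 at hx
    change y < n + 4 at hy
    simp only
    rcases five hx with rfl | rfl | ⟨t, ht, rfl⟩ | rfl | rfl <;>
    rcases five hy with rfl | rfl | ⟨s, hs, rfl⟩ | rfl | rfl <;>
    (try have k1 := qv t ht) <;> (try have k2 := qv s hs) <;>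
    (try have k1' := pv t ht) <;> (try have k2' := pv s hs) <;>
    (try have k3 := g3 t ht s hs) <;>
    (try rw [G2 t ht, P2 t ht, Q2 _ (g1 t ht)]) <;> (try rw [G2 s hs, P2 s hs, Q2 _ (g1 s hs)]) <;>
    (try rw [G0]) <;> (try rw [G1]) <;> (try rw [G3]) <;> (try rw [G4]) <;> omega

theorem bal_not_cor (s t : Bool) (β : PPerm) : ¬ Cor s t (Bal β) := by
  intro h
  rw [Bal, cor_iff] at h
  obtain ⟨h0, h1, h2, h3, h4⟩ := table_d β.2
  have ev : ∀ {k : ℕ} (r : Perm (Fin k)) (x : Fin k), (r x : ℕ) = V r x := by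
    intro k r x; simp [V]
  have h := congrArg Fin.val h
  rw [ev] at h
  cases s <;> cases t
  · have h' : V (ins 1 (Fin.last _) (pE (pC (pA β.2)))) 0 = 0 := h
    omega
  · have h' : V (ins 1 (Fin.last _) (pE (pC (pA β.2)))) 0 = β.1 + 3 := h
    omega
  · have h' : V (ins 1 (Fin.last _) (pE (pC (pA β.2)))) (β.1 + 3) = 0 := h
    omega
  · have h' : V (ins 1 (Fin.last _) (pE (pC (pA β.2)))) (β.1 + 3) = β.1 + 3 := h
    omega

theorem le_of_small {l s : PPerm} (hl : l.1 ≤ 1) (hs : 1 ≤ s.1) : PPerm.Le l s := by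
  have sub : ∀ a b : Fin l.1, a = b := fun a b => Fin.ext (by omega)
  refine ⟨fun x => ⟨0, hs⟩, fun x y h => ?_, fun x y => ?_⟩
  · rw [sub x y] at h; exact absurd h (lt_irrefl _)
  · rw [sub x y]; simp

/-- Indicator of containment. -/
noncomputable def I (l s : PPerm) : ℤ := if PPerm.Le l s then 1 else 0

theorem le_bal_iff {l β : PPerm} : PPerm.Le l (Bal β) ↔
    (PPerm.Le l (oE (oC (oA β))) ∨ PPerm.Le l (oD (oE (oC β))) ∨ PPerm.Le l (oA (oD (oE β))) ∨
    PPerm.Le l (oC (oA (oD β)))) ∨ ∃ β', l = Bal β' ∧ PPerm.Le β' β := by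
  refine ⟨le_bal, ?_⟩
  obtain ⟨h1, h2, h3, h4⟩ := triple_le_bal β
  rintro ((h | h | h | h) | ⟨β', rfl, h⟩)
  · exact le_trans h h1
  · exact le_trans h h2
  · exact le_trans h h3
  · exact le_trans h h4
  · exact bal_mono h

/-- The right hand side without the bracket term. -/
noncomputable def R (l β : PPerm) : ℤ :=
  (I l (oE (oC (oA β))) + I l (oD (oE (oC β))) + I l (oA (oD (oE β))) + I l (oC (oA (oD β))))
  - (I l (oC (oA β)) + I l (oE (oC β)) + I l (oD (oE β)) + I l (oA (oD β)))
  - (I l (oA (oE β)) + I l (oC (oD β)))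
  + (I l (oA β) + I l (oC β) + I l (oE β) + I l (oD β)) - I l β

theorem le_bal_cor {s t : Bool} {l β : PPerm} : PPerm.Le (op s t l) (Bal β) ↔
    (PPerm.Le (op s t l) (oE (oC (oA β))) ∨ PPerm.Le (op s t l) (oD (oE (oC β))) ∨
      PPerm.Le (op s t l) (oA (oD (oE β))) ∨ PPerm.Le (op s t l) (oC (oA (oD β)))) := by
  rw [le_bal_iff]
  refine or_iff_left ?_
  rintro ⟨β', h, _⟩
  exact bal_not_cor s t β' ⟨l, h.symm⟩

theorem one_A {l β : PPerm} (h1 : ¬ Cor false true (oA l))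
    (h2 : ¬ Cor true true (oA l)) (h3 : ¬ Cor true false (oA l)) :
    I (oA l) (Bal β) = R (oA l) β := by
  have hcomm : oA (oE β) = oE (oA β) := op_comm (s := false) (t := false) (s' := true) (t' := true) rfl rfl β
  have i1 : PPerm.Le (oA l) β → PPerm.Le l β := le_trans (le_op_self _ _ _)
  have i2 : PPerm.Le l β → PPerm.Le l (oD β) := fun h => le_trans h (le_op_self _ _ _)
  have i3 : PPerm.Le l (oD β) → PPerm.Le l (oD (oE β)) := fun h =>
    le_trans h (op_mono (le_op_self _ _ _))
  simp only [R, I, le_bal_cor, hcomm, le_op_of_not h1, le_op_of_not h2, le_op_of_not h3, op_le_op]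
  by_cases a1 : PPerm.Le (oA l) β <;> by_cases a2 : PPerm.Le l β <;>
    by_cases a3 : PPerm.Le l (oD β) <;> by_cases a4 : PPerm.Le l (oD (oE β)) <;>
    simp_all

theorem one_C {l β : PPerm} (h1 : ¬ Cor false false (oC l))
    (h2 : ¬ Cor false true (oC l)) (h3 : ¬ Cor true true (oC l)) :
    I (oC l) (Bal β) = R (oC l) β := by
  have hcomm : oC (oD β) = oD (oC β) := op_comm (s := true) (t := false) (s' := false) (t' := true) rfl rfl β
  have i1 : PPerm.Le (oC l) β → PPerm.Le l β := le_trans (le_op_self _ _ _)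
  have i2 : PPerm.Le l β → PPerm.Le l (oA β) := fun h => le_trans h (le_op_self _ _ _)
  have i3 : PPerm.Le l (oA β) → PPerm.Le l (oA (oD β)) := fun h =>
    le_trans h (op_mono (le_op_self _ _ _))
  simp only [R, I, le_bal_cor, hcomm, le_op_of_not h1, le_op_of_not h2, le_op_of_not h3, op_le_op]
  by_cases a1 : PPerm.Le (oC l) β <;> by_cases a2 : PPerm.Le l β <;>
    by_cases a3 : PPerm.Le l (oA β) <;> by_cases a4 : PPerm.Le l (oA (oD β)) <;>
    simp_all

theorem one_E {l β : PPerm} (h1 : ¬ Cor true false (oE l))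
    (h2 : ¬ Cor false false (oE l)) (h3 : ¬ Cor false true (oE l)) :
    I (oE l) (Bal β) = R (oE l) β := by
  have i1 : PPerm.Le (oE l) β → PPerm.Le l β := le_trans (le_op_self _ _ _)
  have i2 : PPerm.Le l β → PPerm.Le l (oC β) := fun h => le_trans h (le_op_self _ _ _)
  have i3 : PPerm.Le l (oC β) → PPerm.Le l (oC (oA β)) := fun h =>
    le_trans h (op_mono (le_op_self _ _ _))
  simp only [R, I, le_bal_cor, le_op_of_not h1, le_op_of_not h2, le_op_of_not h3, op_le_op]
  by_cases a1 : PPerm.Le (oE l) β <;> by_cases a2 : PPerm.Le l β <;>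
    by_cases a3 : PPerm.Le l (oC β) <;> by_cases a4 : PPerm.Le l (oC (oA β)) <;>
    simp_all

theorem one_D {l β : PPerm} (h1 : ¬ Cor true true (oD l))
    (h2 : ¬ Cor true false (oD l)) (h3 : ¬ Cor false false (oD l)) :
    I (oD l) (Bal β) = R (oD l) β := by
  have i1 : PPerm.Le (oD l) β → PPerm.Le l β := le_trans (le_op_self _ _ _)
  have i2 : PPerm.Le l β → PPerm.Le l (oE β) := fun h => le_trans h (le_op_self _ _ _)
  have i3 : PPerm.Le l (oE β) → PPerm.Le l (oE (oC β)) := fun h =>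
    le_trans h (op_mono (le_op_self _ _ _))
  simp only [R, I, le_bal_cor, le_op_of_not h1, le_op_of_not h2, le_op_of_not h3, op_le_op]
  by_cases a1 : PPerm.Le (oD l) β <;> by_cases a2 : PPerm.Le l β <;>
    by_cases a3 : PPerm.Le l (oE β) <;> by_cases a4 : PPerm.Le l (oE (oC β)) <;>
    simp_all

theorem two_A {l β : PPerm} (hl : 1 ≤ l.1) :
    I (oA (oE l)) (Bal β) = R (oA (oE l)) β := by
  have hcomm : ∀ u, oA (oE u) = oE (oA u) := fun u => op_comm rfl rfl u
  have h1 : ¬ Cor true false (oA (oE l)) :=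
    not_cor2 (s := false) (t := false) (by simp only [op]; omega) ⟨_, rfl⟩ (by decide)
  have h2 : ¬ Cor false true (oA (oE l)) :=
    not_cor1 (s := false) (t := false) (by simp only [op]; omega) ⟨_, rfl⟩ (by decide)
  have h3 : ¬ Cor true false (oA l) :=
    not_cor2 (s := false) (t := false) (by simp only [op]; omega) ⟨_, rfl⟩ (by decide)
  have h4 : ¬ Cor false true (oA l) :=
    not_cor1 (s := false) (t := false) (by simp only [op]; omega) ⟨_, rfl⟩ (by decide)
  have h5 : ¬ Cor true false (oE l) :=
    not_cor1 (s := true) (t := true) (by simp only [op]; omega) ⟨_, rfl⟩ (by decide)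
  have h6 : ¬ Cor false true (oE l) :=
    not_cor2 (s := true) (t := true) (by simp only [op]; omega) ⟨_, rfl⟩ (by decide)
  have e0 : ∀ u, PPerm.Le (oA (oE l)) (oE u) ↔ PPerm.Le (oA l) u := fun u => by
    rw [hcomm, op_le_op]
  have i1 : PPerm.Le (oA (oE l)) β → PPerm.Le (oE l) β := le_trans (le_op_self _ _ _)
  have i2 : PPerm.Le (oA (oE l)) β → PPerm.Le (oA l) β := by
    rw [hcomm]; exact le_trans (le_op_self _ _ _)
  have i3 : PPerm.Le (oA l) β → PPerm.Le l β := le_trans (le_op_self _ _ _)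
  have i4 : PPerm.Le (oE l) β → PPerm.Le l β := le_trans (le_op_self _ _ _)
  simp only [R, I, le_bal_cor, e0, le_op_of_not h1, le_op_of_not h2, le_op_of_not h3, le_op_of_not h4,
    le_op_of_not h5, le_op_of_not h6, op_le_op]
  by_cases a1 : PPerm.Le (oA (oE l)) β <;> by_cases a2 : PPerm.Le (oA l) β <;>
    by_cases a3 : PPerm.Le (oE l) β <;> by_cases a4 : PPerm.Le l β <;>
    simp_all

theorem two_C {l β : PPerm} (hl : 1 ≤ l.1) :
    I (oC (oD l)) (Bal β) = R (oC (oD l)) β := by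
  have hcomm : ∀ u, oC (oD u) = oD (oC u) := fun u => op_comm rfl rfl u
  have h1 : ¬ Cor false false (oC (oD l)) :=
    not_cor2 (s := true) (t := false) (by simp only [op]; omega) ⟨_, rfl⟩ (by decide)
  have h2 : ¬ Cor true true (oC (oD l)) :=
    not_cor1 (s := true) (t := false) (by simp only [op]; omega) ⟨_, rfl⟩ (by decide)
  have h3 : ¬ Cor false false (oC l) :=
    not_cor2 (s := true) (t := false) (by simp only [op]; omega) ⟨_, rfl⟩ (by decide)
  have h4 : ¬ Cor true true (oC l) :=
    not_cor1 (s := true) (t := false) (by simp only [op]; omega) ⟨_, rfl⟩ (by decide)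
  have h5 : ¬ Cor false false (oD l) :=
    not_cor1 (s := false) (t := true) (by simp only [op]; omega) ⟨_, rfl⟩ (by decide)
  have h6 : ¬ Cor true true (oD l) :=
    not_cor2 (s := false) (t := true) (by simp only [op]; omega) ⟨_, rfl⟩ (by decide)
  have e0 : ∀ u, PPerm.Le (oC (oD l)) (oD u) ↔ PPerm.Le (oC l) u := fun u => by
    rw [hcomm, op_le_op]
  have i1 : PPerm.Le (oC (oD l)) β → PPerm.Le (oD l) β := le_trans (le_op_self _ _ _)
  have i2 : PPerm.Le (oC (oD l)) β → PPerm.Le (oC l) β := by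
    rw [hcomm]; exact le_trans (le_op_self _ _ _)
  have i3 : PPerm.Le (oC l) β → PPerm.Le l β := le_trans (le_op_self _ _ _)
  have i4 : PPerm.Le (oD l) β → PPerm.Le l β := le_trans (le_op_self _ _ _)
  simp only [R, I, le_bal_cor, e0, le_op_of_not h1, le_op_of_not h2, le_op_of_not h3, le_op_of_not h4,
    le_op_of_not h5, le_op_of_not h6, op_le_op]
  by_cases a1 : PPerm.Le (oC (oD l)) β <;> by_cases a2 : PPerm.Le (oC l) β <;>
    by_cases a3 : PPerm.Le (oD l) β <;> by_cases a4 : PPerm.Le l β <;>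
    simp_all

theorem two_A_small {l β : PPerm} (hl : l.1 = 0) (hβ : 1 ≤ β.1) :
    I (oA (oE l)) (Bal β) = R (oA (oE l)) β := by
  have hcomm : ∀ u, oA (oE u) = oE (oA u) := fun u => op_comm rfl rfl u
  have h1 : ¬ Cor true false (oA (oE l)) :=
    not_cor2 (s := false) (t := false) (by simp only [op]; omega) ⟨_, rfl⟩ (by decide)
  have h2 : ¬ Cor false true (oA (oE l)) :=
    not_cor1 (s := false) (t := false) (by simp only [op]; omega) ⟨_, rfl⟩ (by decide)
  have e0 : ∀ u, PPerm.Le (oA (oE l)) (oE u) ↔ PPerm.Le (oA l) u := fun u => by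
    rw [hcomm, op_le_op]
  have e1 : ∀ u, PPerm.Le β u → PPerm.Le (oA l) u := fun u hu =>
    le_trans (le_of_small (by simp only [op]; omega) hβ) hu
  have e2 : ∀ u, PPerm.Le β u → PPerm.Le (oE l) u := fun u hu =>
    le_trans (le_of_small (by simp only [op]; omega) hβ) hu
  have b0 := le_refl β
  have b1 : ∀ s t, PPerm.Le β (op s t β) := fun s t => le_op_self _ _ _
  have b2 : ∀ s t s' t', PPerm.Le β (op s t (op s' t' β)) := fun s t s' t' =>
    le_trans (b1 s' t') (le_op_self _ _ _)
  simp only [R, I, le_bal_cor, e0, le_op_of_not h1, le_op_of_not h2, op_le_op, e1, e2, b0, b1, b2]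
  by_cases a1 : PPerm.Le (oA (oE l)) β <;> simp_all [le_of_small]

theorem two_C_small {l β : PPerm} (hl : l.1 = 0) (hβ : 1 ≤ β.1) :
    I (oC (oD l)) (Bal β) = R (oC (oD l)) β := by
  have hcomm : ∀ u, oC (oD u) = oD (oC u) := fun u => op_comm rfl rfl u
  have h1 : ¬ Cor false false (oC (oD l)) :=
    not_cor2 (s := true) (t := false) (by simp only [op]; omega) ⟨_, rfl⟩ (by decide)
  have h2 : ¬ Cor true true (oC (oD l)) :=
    not_cor1 (s := true) (t := false) (by simp only [op]; omega) ⟨_, rfl⟩ (by decide)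
  have e0 : ∀ u, PPerm.Le (oC (oD l)) (oD u) ↔ PPerm.Le (oC l) u := fun u => by
    rw [hcomm, op_le_op]
  have e1 : ∀ u, PPerm.Le β u → PPerm.Le (oC l) u := fun u hu =>
    le_trans (le_of_small (by simp only [op]; omega) hβ) hu
  have e2 : ∀ u, PPerm.Le β u → PPerm.Le (oD l) u := fun u hu =>
    le_trans (le_of_small (by simp only [op]; omega) hβ) hu
  have b0 := le_refl β
  have b1 : ∀ s t, PPerm.Le β (op s t β) := fun s t => le_op_self _ _ _
  have b2 : ∀ s t s' t', PPerm.Le β (op s t (op s' t' β)) := fun s t s' t' =>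
    le_trans (b1 s' t') (le_op_self _ _ _)
  simp only [R, I, le_bal_cor, e0, le_op_of_not h1, le_op_of_not h2, op_le_op, e1, e2, b0, b1, b2]
  by_cases a1 : PPerm.Le (oC (oD l)) β <;> simp_all [le_of_small]

/-- The bracket. -/
noncomputable def Br (l β : PPerm) : ℤ :=
  if (∃ β', l = Bal β' ∧ PPerm.Le β' β) ∧ ¬ PPerm.Le l β then 1 else 0

theorem br_cor {s t : Bool} {l β : PPerm} : Br (op s t l) β = 0 := by
  refine if_neg ?_
  rintro ⟨⟨β', h, _⟩, _⟩
  exact bal_not_cor s t β' ⟨l, h.symm⟩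

theorem none_cor {l β : PPerm} (h : ∀ s t, ¬ Cor s t l) : I l (Bal β) = Br l β + R l β := by
  simp only [R, I, Br, le_bal_iff, le_op_of_not (h _ _), or_self]
  by_cases a1 : PPerm.Le l β <;> by_cases a2 : ∃ β', l = Bal β' ∧ PPerm.Le β' β <;>
    simp [a1, a2]

theorem small {l β : PPerm} (hl : l.1 ≤ 1) (hβ : 1 ≤ β.1) : I l (Bal β) = Br l β + R l β := by
  have b : ∀ u : PPerm, 1 ≤ u.1 → I l u = 1 := fun u hu => if_pos (le_of_small hl hu)
  have hb : Br l β = 0 := by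
    refine if_neg ?_
    rintro ⟨_, h⟩
    exact h (le_of_small hl hβ)
  have o : ∀ s t (u : PPerm), 1 ≤ (op s t u).1 := fun s t u => by simp only [op]; omega
  rw [hb, R, b _ (by simp only [Bal]; omega), b _ (o _ _ _), b _ (o _ _ _), b _ (o _ _ _),
    b _ (o _ _ _), b _ (o _ _ _), b _ (o _ _ _), b _ (o _ _ _), b _ (o _ _ _), b _ (o _ _ _),
    b _ (o _ _ _), b _ (o _ _ _), b _ (o _ _ _), b _ (o _ _ _), b _ (o _ _ _), b _ hβ]
  norm_num

theorem main_identity {l β : PPerm} (hβ : 1 ≤ β.1) : I l (Bal β) = Br l β + R l β := by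
  by_cases hl : l.1 ≤ 1
  · exact small hl hβ
  have hl : 2 ≤ l.1 := by omega
  by_cases hA : Cor false false l
  · have nC := not_cor2 (s' := true) hl hA (by decide)
    have nD := not_cor1 (t' := true) hl hA (by decide)
    by_cases hE : Cor true true l
    · obtain ⟨u, rfl⟩ := hA
      obtain ⟨w, rfl⟩ := cor_opp rfl rfl (by simp only [op] at hl; omega) hE
      rw [br_cor, zero_add]
      by_cases hw : w.1 = 0
      · exact two_A_small hw hβ
      · exact two_A (by omega)
    · obtain ⟨u, rfl⟩ := hA
      rw [br_cor, zero_add]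
      exact one_A nD hE nC
  by_cases hC : Cor true false l
  · have nE := not_cor1 (t' := true) hl hC (by decide)
    by_cases hD : Cor false true l
    · obtain ⟨u, rfl⟩ := hC
      obtain ⟨w, rfl⟩ := cor_opp rfl rfl (by simp only [op] at hl; omega) hD
      rw [br_cor, zero_add]
      by_cases hw : w.1 = 0
      · exact two_C_small hw hβ
      · exact two_C (by omega)
    · obtain ⟨u, rfl⟩ := hC
      rw [br_cor, zero_add]
      exact one_C hA hD nE
  by_cases hE : Cor true true l
  · have nD := not_cor2 (s' := false) hl hE (by decide)
    obtain ⟨u, rfl⟩ := hE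
    rw [br_cor, zero_add]
    exact one_E hC hA nD
  by_cases hD : Cor false true l
  · obtain ⟨u, rfl⟩ := hD
    rw [br_cor, zero_add]
    exact one_D hE hC hA
  · refine none_cor ?_
    rintro (_ | _) (_ | _) <;> assumption

theorem aux_fuel (s : PPerm) : ∀ n n' : ℕ, ∀ π : PPerm, π.1 < n → π.1 < n' →
    muAux n s π = muAux n' s π := by
  intro n
  induction n with
  | zero => intro n' π h; omega
  | succ n ih =>
    intro n' π h h'
    cases n' with
    | zero => omega
    | succ n' =>
      simp only [muAux]
      split_ifs
      · rfl
      · congr 1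
        refine Finset.sum_congr rfl fun m hm => Finset.sum_congr rfl fun p _ => ?_
        have := Finset.mem_range.1 hm
        exact ih n' ⟨m, p⟩ (by simp only; omega) (by simp only; omega)
      · rfl

/-- Principal Möbius function. -/
noncomputable def F (l : PPerm) : ℤ := mu PPerm.one l

theorem F_one : F PPerm.one = 1 := by simp [F, mu, muAux]

theorem F_not {l : PPerm} (h : ¬ PPerm.Le PPerm.one l) : F l = 0 := by
  have : PPerm.one ≠ l := fun e => h (e ▸ le_refl _)
  simp [F, mu, muAux, this, h]

theorem F_rec {l : PPerm} (h : 1 ≤ l.1) (h1 : l ≠ PPerm.one) :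
    F l = - ∑ m ∈ Finset.range l.1, ∑ p : Perm (Fin m), F ⟨m, p⟩ * I ⟨m, p⟩ l := by
  have hle : PPerm.Le PPerm.one l := le_of_small (by rfl) h
  rw [F, mu, muAux, if_neg (Ne.symm h1), if_pos hle]
  congr 1
  refine Finset.sum_congr rfl fun m hm => ?_
  rw [Finset.sum_filter]
  refine Finset.sum_congr rfl fun p _ => ?_
  have hm := Finset.mem_range.1 hm
  have e : muAux l.1 PPerm.one ⟨m, p⟩ = F ⟨m, p⟩ := aux_fuel _ _ _ _ hm (by simp)
  rw [e, I]
  by_cases a : PPerm.Le PPerm.one ⟨m, p⟩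
  · simp [a]
  · simp [a, F_not a]

/-- All permutations of length at most `N`. -/
def A (N : ℕ) : Finset PPerm := (Finset.range (N+1)).sigma (fun _ => Finset.univ)

theorem mem_A {N : ℕ} {l : PPerm} : l ∈ A N ↔ l.1 ≤ N := by
  simp [A, Nat.lt_succ_iff]

theorem key_sum {N : ℕ} {s : PPerm} (h : 1 ≤ s.1) (hN : s.1 ≤ N) :
    ∑ l ∈ A N, F l * I l s = if s = PPerm.one then 1 else 0 := by
  have e1 : ∑ l ∈ A N, F l * I l s = ∑ l ∈ A s.1, F l * I l s := by
    refine (Finset.sum_subset (fun l hl => ?_) fun l _ hl => ?_).symm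
    · rw [mem_A] at hl ⊢; omega
    · rw [mem_A] at hl
      rw [I, if_neg (fun h => hl (le_len h)), mul_zero]
  rw [e1, A, Finset.sum_sigma, Finset.sum_range_succ]
  have e2 : ∑ p : Perm (Fin s.1), F ⟨s.1, p⟩ * I ⟨s.1, p⟩ s = F s := by
    rw [Finset.sum_eq_single s.2]
    · rw [I, if_pos (le_refl _), mul_one]
    · intro p _ hp
      rw [I, if_neg, mul_zero]
      intro hle
      apply hp
      have h3 := eq_of_le_len hle rfl
      obtain ⟨n, q⟩ := s
      simpa using h3
    · simp
  rw [e2]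
  by_cases h1 : s = PPerm.one
  · subst h1
    rw [if_pos rfl, F_one]
    have : ∑ m ∈ Finset.range PPerm.one.1, ∑ p : Perm (Fin m), F ⟨m, p⟩ * I ⟨m, p⟩ PPerm.one = 0 := by
      refine Finset.sum_eq_zero fun m hm => Finset.sum_eq_zero fun p _ => ?_
      have hm : m < 1 := Finset.mem_range.1 hm
      rw [F_not, zero_mul]
      intro hle
      have : 1 ≤ m := le_len hle
      omega
    rw [this, zero_add]
  · rw [if_neg h1, F_rec h h1]
    ring

theorem sum_R {N : ℕ} {β : PPerm} (h : 1 ≤ β.1) (hN : β.1 + 4 ≤ N) :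
    ∑ l ∈ A N, F l * R l β = - (if β = PPerm.one then 1 else 0) := by
  have o : ∀ s t (u : PPerm), (op s t u).1 = u.1 + 1 := fun s t u => rfl
  have z : ∀ s t (u : PPerm), 1 ≤ u.1 → (op s t u).1 ≤ N → ∑ l ∈ A N, F l * I l (op s t u) = 0 := by
    intro s t u hu hN
    rw [key_sum (by rw [o]; omega) hN, if_neg]
    intro e
    have : u.1 + 1 = 1 := congrArg Sigma.fst e
    omega
  have zz : ∀ s t s' t', ∑ l ∈ A N, F l * I l (op s t (op s' t' β)) = 0 := fun s t s' t' =>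
    z _ _ _ (by simp only [o]; omega) (by simp only [o]; omega)
  have zzz : ∀ s t s' t' s'' t'', ∑ l ∈ A N, F l * I l (op s t (op s' t' (op s'' t'' β))) = 0 :=
    fun s t s' t' _ _ => z _ _ _ (by simp only [o]; omega) (by simp only [o]; omega)
  have z1 : ∀ s t, ∑ l ∈ A N, F l * I l (op s t β) = 0 := fun s t =>
    z _ _ _ h (by simp only [o]; omega)
  simp only [R, mul_add, mul_sub, Finset.sum_add_distrib, Finset.sum_sub_distrib, z1, zz, zzz,
    key_sum h (by omega : β.1 ≤ N)]
  ring

theorem sum_Br {N : ℕ} {β : PPerm} (h : 1 ≤ β.1) (hN : β.1 + 4 ≤ N) :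
    ∑ l ∈ A N, F l * Br l β = if β = PPerm.one then 1 else 0 := by
  have e : ∑ l ∈ A N, F l * I l (Bal β) = 0 := by
    rw [key_sum (by simp only [Bal]; omega) hN, if_neg]
    intro e
    have : β.1 + 4 = 1 := congrArg Sigma.fst e
    omega
  simp only [main_identity h, mul_add, Finset.sum_add_distrib, sum_R h hN] at e
  linarith

theorem sum_bal (N : ℕ) (φ : PPerm → ℤ) :
    ∑ l ∈ A (N+4), (if ∃ b, l = Bal b then φ l else 0) = ∑ b ∈ A N, φ (Bal b) := by
  rw [← Finset.sum_filter]
  symm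
  refine Finset.sum_bij (fun b _ => Bal b) ?_ ?_ ?_ ?_
  · intro b hb
    rw [mem_A] at hb
    rw [Finset.mem_filter, mem_A]
    exact ⟨by simp only [Bal]; omega, b, rfl⟩
  · intro a _ b _ h
    exact bal_inj h
  · intro l hl
    rw [Finset.mem_filter, mem_A] at hl
    obtain ⟨hl, b, rfl⟩ := hl
    refine ⟨b, ?_, rfl⟩
    rw [mem_A]
    simp only [Bal] at hl
    omega
  · intro b _
    rfl

noncomputable def E (l : PPerm) : ℤ := if ∃ b, l = Bal b then F l else 0

noncomputable def H (l : PPerm) : ℤ := F (Bal l) - E l - F l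

theorem sum_H {N : ℕ} {β : PPerm} (h : 1 ≤ β.1) (hN : β.1 ≤ N) :
    ∑ l ∈ A N, H l * I l β = 0 := by
  have h1 := sum_Br (N := N + 4) h (by omega)
  have h2 : ∀ l, F l * Br l β = if ∃ b, l = Bal b then
      F l * (if (∃ b, l = Bal b ∧ PPerm.Le b β) then 1 else 0) - F l * I l β else 0 := by
    intro l
    split_ifs with a b b
    · rw [Br, I]
      by_cases c : PPerm.Le l β <;> simp [b, c]
    · have c : ¬ PPerm.Le l β := by
        intro c
        obtain ⟨b', rfl⟩ := a
        exact b ⟨b', rfl, le_trans (le_bal_self _) c⟩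
      rw [Br, I, if_neg c, if_neg (fun x => b x.1)]
      ring
    · rw [Br, if_neg, mul_zero]
      rintro ⟨⟨b', hb, _⟩, _⟩
      exact a ⟨b', hb⟩
  have h3 : ∀ l, (∃ b, Bal l = Bal b ∧ PPerm.Le b β) ↔ PPerm.Le l β := by
    intro l
    refine ⟨?_, fun h => ⟨l, rfl, h⟩⟩
    rintro ⟨b, hb, hle⟩
    rwa [bal_inj hb]
  have h4 : ∑ l ∈ A (N+4), F l * Br l β =
      ∑ l ∈ A N, F (Bal l) * I l β - ∑ l ∈ A (N+4), E l * I l β := by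
    have e1 : ∑ l ∈ A N, F (Bal l) * I l β =
        ∑ l ∈ A (N+4), if ∃ b, l = Bal b then
          F l * (if (∃ b, l = Bal b ∧ PPerm.Le b β) then 1 else 0) else 0 := by
      rw [sum_bal N (fun l => F l * (if (∃ b, l = Bal b ∧ PPerm.Le b β) then 1 else 0))]
      refine Finset.sum_congr rfl fun l _ => ?_
      simp only [h3, I]
    rw [e1, ← Finset.sum_sub_distrib]
    refine Finset.sum_congr rfl fun l _ => ?_
    rw [h2, E]
    split_ifs <;> ring
  have h5 : ∑ l ∈ A (N+4), E l * I l β = ∑ l ∈ A N, E l * I l β := by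
    refine (Finset.sum_subset (fun l hl => ?_) fun l _ hl => ?_).symm
    · rw [mem_A] at hl ⊢; omega
    · rw [mem_A] at hl
      rw [I, if_neg (fun h => hl (by have := le_len h; omega)), mul_zero]
  have h6 := key_sum h hN
  simp only [H, sub_mul, Finset.sum_sub_distrib]
  linarith

theorem H_zero : ∀ n : ℕ, ∀ β : PPerm, β.1 = n → 2 ≤ n → H β = 0 := by
  intro n
  induction n using Nat.strong_induction_on with
  | _ n ih =>
    intro β hβ hn
    have s1 := sum_H (N := n) (β := β) (by omega) (by omega)
    have s2 := sum_H (N := n) (β := PPerm.one) (by simp [PPerm.one]) (by simp [PPerm.one]; omega)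
    have key : ∀ l, l ∈ A n → H l * I l β = H l * I l PPerm.one + if l = β then H β else 0 := by
      intro l hl
      rw [mem_A] at hl
      by_cases c : l.1 ≤ 1
      · have : l ≠ β := by rintro rfl; omega
        rw [I, I, if_pos (le_of_small c (by omega)), if_pos (le_of_small c (by simp [PPerm.one])),
          if_neg this, add_zero]
      · have no : ¬ PPerm.Le l PPerm.one := fun h => c (le_len h)
        rw [I, I, if_neg no, mul_zero, zero_add]
        by_cases e : l = β
        · subst e
          rw [if_pos rfl, if_pos (le_refl _), mul_one]
        · rw [if_neg e]
          by_cases hle : PPerm.Le l β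
          · have hlt : l.1 < n := by
              have := le_len hle
              rcases Nat.lt_or_ge l.1 n with h | h
              · exact h
              · exact absurd (eq_of_le_len hle (by omega)) e
            rw [ih l.1 hlt l rfl (by omega), zero_mul]
          · rw [if_neg hle, mul_zero]
    rw [Finset.sum_congr rfl key, Finset.sum_add_distrib, s2, zero_add,
      Finset.sum_ite_eq' , if_pos (by rw [mem_A]; omega)] at s1
    exact s1

end DB

/-- **(Theorem `theorem-2413-balloon-beta-is-a-balloon`.)**  If `β` is a
nonempty permutation which is itself a 2413-balloon, i.e. `β = B(γ)` for
some nonempty permutation `γ`, and `π = B(β)`, then `μ(1,π) = 2·μ(1,β)`. -/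
theorem mu_double_balloon (γ β π : PPerm) (hγ : 0 < γ.1)
    (hβ : IsBalloon2413 γ β) (hπ : IsBalloon2413 β π) :
    mu PPerm.one π = 2 * mu PPerm.one β := by
  have h1 := DB.bal_of_is hβ
  have h2 := DB.bal_of_is hπ
  have h3 := DB.H_zero β.1 β rfl (by have := hβ.1; omega)
  rw [DB.H, DB.E, if_pos ⟨γ, h1⟩, ← h2, DB.F, DB.F] at h3
  linarith
end
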